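/- Let 𝒜 : ℝ^{n₁×n₂} → ℝ^m be a random linear operator represented by matrices A₁,…,A_m whose entries are i.i.d. standard Gaussian N(0,1) random variables, let τ ∈ [1, n₁] and ε ∈ (0,1). If m ≥ 36 τ n₂ / ε², then Pr[ρ_τ^max(𝒜/√m) > 1 + ε] ≤ exp(−m ε²/8) and Pr[ρ_τ^min(𝒜/√m) < 1 − ε] ≤ exp(−m ε²/8). -/

import Mathlib

open scoped BigOperators

noncomputable section

/-- Frobenius norm of a real matrix. -/
def frobNorm {n₁ n₂ : ℕ} (X : Matrix (Fin n₁) (Fin n₂) ℝ) : ℝ :=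
  Real.sqrt (∑ i, ∑ j, (X i j) ^ 2)

/-- Singular values of a real matrix: square roots of eigenvalues of `X * Xᴴ`. -/
def singVals {n₁ n₂ : ℕ} (X : Matrix (Fin n₁) (Fin n₂) ℝ) : Fin n₁ → ℝ :=
  fun i => Real.sqrt ((Matrix.isHermitian_mul_conjTranspose_self X).eigenvalues i)

/-- Nuclear norm: sum of singular values. -/
def nuclearNorm {n₁ n₂ : ℕ} (X : Matrix (Fin n₁) (Fin n₂) ℝ) : ℝ :=
  ∑ i, singVals X i

/-- Operator norm: largest singular value. -/
def matOpNorm {n₁ n₂ : ℕ} (X : Matrix (Fin n₁) (Fin n₂) ℝ) : ℝ :=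
  ⨆ i, singVals X i

/-- ℓ*-rank. -/
def lstarRank {n₁ n₂ : ℕ} (X : Matrix (Fin n₁) (Fin n₂) ℝ) : ℝ :=
  nuclearNorm X ^ 2 / frobNorm X ^ 2

/-- Euclidean norm of a vector. -/
def vnorm {m : ℕ} (v : Fin m → ℝ) : ℝ :=
  Real.sqrt (∑ k, (v k) ^ 2)

/-- Matrix inner product. -/
def matInner {n₁ n₂ : ℕ} (X Y : Matrix (Fin n₁) (Fin n₂) ℝ) : ℝ :=
  (X.transpose * Y).trace

def cmsvMin {n₁ n₂ m : ℕ} (A : Matrix (Fin n₁) (Fin n₂) ℝ → (Fin m → ℝ)) (τ : ℝ) : ℝ :=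
  sInf {c | ∃ X : Matrix (Fin n₁) (Fin n₂) ℝ, X ≠ 0 ∧ lstarRank X ≤ τ ∧ c = vnorm (A X) / frobNorm X}

def cmsvMax {n₁ n₂ m : ℕ} (A : Matrix (Fin n₁) (Fin n₂) ℝ → (Fin m → ℝ)) (τ : ℝ) : ℝ :=
  sSup {c | ∃ X : Matrix (Fin n₁) (Fin n₂) ℝ, X ≠ 0 ∧ lstarRank X ≤ τ ∧ c = vnorm (A X) / frobNorm X}

def rcsvMin {n₁ n₂ m : ℕ} (A : Matrix (Fin n₁) (Fin n₂) ℝ → (Fin m → ℝ)) (r : ℕ) : ℝ :=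
  sInf {c | ∃ X : Matrix (Fin n₁) (Fin n₂) ℝ, X ≠ 0 ∧ X.rank ≤ r ∧ c = vnorm (A X) / frobNorm X}

def rcsvMax {n₁ n₂ m : ℕ} (A : Matrix (Fin n₁) (Fin n₂) ℝ → (Fin m → ℝ)) (r : ℕ) : ℝ :=
  sSup {c | ∃ X : Matrix (Fin n₁) (Fin n₂) ℝ, X ≠ 0 ∧ X.rank ≤ r ∧ c = vnorm (A X) / frobNorm X}

def mRIC {n₁ n₂ m : ℕ} (A : Matrix (Fin n₁) (Fin n₂) ℝ → (Fin m → ℝ)) (r : ℕ) : ℝ :=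
  sInf {δ : ℝ | 0 < δ ∧ ∀ X : Matrix (Fin n₁) (Fin n₂) ℝ, X ≠ 0 → X.rank ≤ r →
    1 - δ ≤ (vnorm (A X)) ^ 2 / (frobNorm X) ^ 2 ∧ (vnorm (A X)) ^ 2 / (frobNorm X) ^ 2 ≤ 1 + δ}

def opOf {n₁ n₂ m : ℕ} (A : Fin m → Matrix (Fin n₁) (Fin n₂) ℝ) :
    Matrix (Fin n₁) (Fin n₂) ℝ → (Fin m → ℝ) :=
  fun X k => matInner (A k) X


open MeasureTheory ProbabilityTheory

/-- The Gaussian ensemble: all entries of the `m` representing matrices are i.i.d. `N(0,1)`. -/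
def gaussianEnsemble (m n₁ n₂ : ℕ) : Measure ((Fin m × Fin n₁ × Fin n₂) → ℝ) :=
  Measure.pi fun _ => gaussianReal 0 1

/-- The collection of representing matrices determined by a sample `ω`. -/
def ensembleMatrices {m n₁ n₂ : ℕ} (ω : (Fin m × Fin n₁ × Fin n₂) → ℝ) :
    Fin m → Matrix (Fin n₁) (Fin n₂) ℝ :=
  fun k => Matrix.of fun i j => ω (k, i, j)

/-- The scaled operator `𝒜/√m` determined by a sample `ω`. -/
def scaledOp {m n₁ n₂ : ℕ} (ω : (Fin m × Fin n₁ × Fin n₂) → ℝ) :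
    Matrix (Fin n₁) (Fin n₂) ℝ → (Fin m → ℝ) :=
  fun X k => opOf (ensembleMatrices ω) X k / Real.sqrt m

/-- The standard Gaussian measure on `ι → ℝ`. -/
abbrev stdGaussianPi (ι : Type*) [Fintype ι] : Measure (ι → ℝ) :=
  Measure.pi fun _ => gaussianReal 0 1

/-- At most exponential growth of a real function on a normed space. -/
def HasExpGrowth {E : Type*} [NormedAddCommGroup E] (f : E → ℝ) : Prop :=
  ∃ c C : ℝ, 0 ≤ c ∧ 0 ≤ C ∧ ∀ x, |f x| ≤ C * Real.exp (c * ‖x‖)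

namespace HasExpGrowth

variable {E F : Type*} [NormedAddCommGroup E] [NormedAddCommGroup F]

lemma mono {f g : E → ℝ} (hg : HasExpGrowth g) (h : ∀ x, |f x| ≤ |g x|) : HasExpGrowth f := by
  obtain ⟨c, C, hc, hC, hb⟩ := hg
  exact ⟨c, C, hc, hC, fun x => (h x).trans (hb x)⟩

lemma mul {f g : E → ℝ} (hf : HasExpGrowth f) (hg : HasExpGrowth g) :
    HasExpGrowth fun x => f x * g x := by
  obtain ⟨c, C, hc, hC, hb⟩ := hf
  obtain ⟨d, D, hd, hD, hb'⟩ := hg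
  refine ⟨c + d, C * D, by positivity, by positivity, fun x => ?_⟩
  rw [abs_mul, add_mul, Real.exp_add]
  calc |f x| * |g x| ≤ (C * Real.exp (c * ‖x‖)) * (D * Real.exp (d * ‖x‖)) :=
        mul_le_mul (hb x) (hb' x) (abs_nonneg _) (by positivity)
    _ = _ := by ring

lemma add {f g : E → ℝ} (hf : HasExpGrowth f) (hg : HasExpGrowth g) :
    HasExpGrowth fun x => f x + g x := by
  obtain ⟨c, C, hc, hC, hb⟩ := hf
  obtain ⟨d, D, hd, hD, hb'⟩ := hg
  refine ⟨c + d, C + D, by positivity, by positivity, fun x => ?_⟩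
  have h1 : Real.exp (c * ‖x‖) ≤ Real.exp ((c + d) * ‖x‖) := by
    gcongr; linarith
  have h2 : Real.exp (d * ‖x‖) ≤ Real.exp ((c + d) * ‖x‖) := by
    gcongr; linarith
  calc |f x + g x| ≤ |f x| + |g x| := abs_add_le _ _
    _ ≤ C * Real.exp (c * ‖x‖) + D * Real.exp (d * ‖x‖) := add_le_add (hb x) (hb' x)
    _ ≤ C * Real.exp ((c + d) * ‖x‖) + D * Real.exp ((c + d) * ‖x‖) := by gcongr
    _ = _ := by ring

lemma of_bounded {f : E → ℝ} (C : ℝ) (h : ∀ x, |f x| ≤ C) : HasExpGrowth f :=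
  ⟨0, C, le_rfl, (abs_nonneg _).trans (h 0), fun x => by simpa using h x⟩

lemma sum {κ : Type*} (s : Finset κ) {f : κ → E → ℝ} (h : ∀ i ∈ s, HasExpGrowth (f i)) :
    HasExpGrowth fun x => ∑ i ∈ s, f i x := by
  classical
  induction s using Finset.induction_on with
  | empty => exact of_bounded 0 (by simp)
  | insert i s hi ih =>
    simp only [Finset.sum_insert hi]
    exact (h i (by simp)).add (ih fun j hj => h j (by simp [hj]))

lemma of_linear_bound {f : E → ℝ} (A B : ℝ) (hA : 0 ≤ A) (hB : 0 ≤ B)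
    (h : ∀ x, |f x| ≤ A + B * ‖x‖) : HasExpGrowth f := by
  refine ⟨1, A + B, zero_le_one, by positivity, fun x => (h x).trans ?_⟩
  have h1 := Real.add_one_le_exp ‖x‖
  have h2 : (1 : ℝ) ≤ Real.exp ‖x‖ := Real.one_le_exp (norm_nonneg x)
  rw [one_mul]
  nlinarith [norm_nonneg x]

lemma exp_of_linear_bound {f : E → ℝ} (A B : ℝ) (hB : 0 ≤ B)
    (h : ∀ x, |f x| ≤ A + B * ‖x‖) : HasExpGrowth fun x => Real.exp (f x) := by
  refine ⟨B, Real.exp A, hB, by positivity, fun x => ?_⟩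
  rw [Real.abs_exp, ← Real.exp_add]
  exact Real.exp_le_exp.2 ((le_abs_self _).trans (h x))

lemma comp {f : F → ℝ} (hf : HasExpGrowth f) (g : E → F) (D : ℝ) (hD : 0 ≤ D)
    (hg : ∀ x, ‖g x‖ ≤ D * ‖x‖) : HasExpGrowth fun x => f (g x) := by
  obtain ⟨c, C, hc, hC, hb⟩ := hf
  refine ⟨c * D, C, by positivity, hC, fun x => (hb _).trans ?_⟩
  rw [mul_assoc]
  gcongr
  exact hg x

lemma apply {ι : Type*} [Fintype ι] (k : ι) : HasExpGrowth fun x : ι → ℝ => x k :=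
  of_linear_bound 0 1 le_rfl zero_le_one fun x => by simpa using norm_le_pi_norm x k

lemma integrable {ι : Type*} [Fintype ι] {f : (ι → ℝ) → ℝ} (hf : HasExpGrowth f)
    (hm : Measurable f) : Integrable f (stdGaussianPi ι) := by
  obtain ⟨c, C, hc, hC, hb⟩ := hf
  have h1 : Integrable (fun x : ℝ => Real.exp (c * |x|)) (gaussianReal 0 1) :=
    integrable_exp_mul_abs (integrable_exp_mul_gaussianReal c)
      (integrable_exp_mul_gaussianReal (-c))
  have h2 : Integrable (fun x : ι → ℝ => ∏ i, Real.exp (c * |x i|)) (stdGaussianPi ι) :=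
    Integrable.fintype_prod (f := fun _ (y : ℝ) => Real.exp (c * |y|)) fun _ => h1
  refine (h2.const_mul C).mono' hm.aestronglyMeasurable (Filter.Eventually.of_forall fun x => ?_)
  refine (hb x).trans ?_
  rw [← Real.exp_sum, ← Finset.mul_sum]
  gcongr
  refine (pi_norm_le_iff_of_nonneg (Finset.sum_nonneg fun i _ => abs_nonneg _)).2 fun i => ?_
  exact Finset.single_le_sum (f := fun i => |x i|) (fun i _ => abs_nonneg _) (Finset.mem_univ i)

lemma integrable_real {f : ℝ → ℝ} (hf : HasExpGrowth f)
    (hm : Measurable f) : Integrable f (gaussianReal 0 1) := by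
  obtain ⟨c, C, hc, hC, hb⟩ := hf
  have h1 : Integrable (fun x : ℝ => Real.exp (c * |x|)) (gaussianReal 0 1) :=
    integrable_exp_mul_abs (integrable_exp_mul_gaussianReal c)
      (integrable_exp_mul_gaussianReal (-c))
  exact (h1.const_mul C).mono' hm.aestronglyMeasurable (Filter.Eventually.of_forall hb)

end HasExpGrowth

/-- Stein's identity on the real line. -/
lemma integral_id_mul_gaussianReal {f f' : ℝ → ℝ} (hd : ∀ x, HasDerivAt f (f' x) x)
    (hf : HasExpGrowth f) (hf' : HasExpGrowth f') (hm : Measurable f') :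
    ∫ x, x * f x ∂gaussianReal 0 1 = ∫ x, f' x ∂gaussianReal 0 1 := by
  have hfm : Measurable f :=
    (continuous_iff_continuousAt.2 fun x => (hd x).continuousAt).measurable
  have hid : HasExpGrowth fun x : ℝ => x :=
    HasExpGrowth.of_linear_bound 0 1 le_rfl zero_le_one fun x => by simp
  have key : ∀ g : ℝ → ℝ, HasExpGrowth g → Measurable g →
      Integrable fun x => gaussianPDFReal 0 1 x * g x := by
    intro g hg hgm
    have h := hg.integrable_real hgm
    rw [gaussianReal_of_var_ne_zero _ one_ne_zero, gaussianPDF_def,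
      integrable_withDensity_iff_integrable_smul₀' (by fun_prop) (by simp)] at h
    refine h.congr (Filter.Eventually.of_forall fun x => ?_)
    simp [ENNReal.toReal_ofReal (gaussianPDFReal_nonneg 0 1 x)]
  have hφ : ∀ x, HasDerivAt (gaussianPDFReal 0 1) (-(x * gaussianPDFReal 0 1 x)) x := by
    intro x
    have h1 : HasDerivAt (fun x : ℝ => -(x - 0) ^ 2 / (2 * ((1 : NNReal) : ℝ))) (-x) x :=
      ((((hasDerivAt_id x).sub_const 0).pow 2).neg.div_const
        (2 * ((1 : NNReal) : ℝ))).congr_deriv (by simp; ring)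
    rw [gaussianPDFReal_def]
    exact ((h1.exp).const_mul (Real.sqrt (2 * Real.pi * ((1 : NNReal) : ℝ)))⁻¹).congr_deriv
      (by ring)
  have h := integral_mul_deriv_eq_deriv_mul_of_integrable (u := gaussianPDFReal 0 1) (v := f)
    (u' := fun x => -(x * gaussianPDFReal 0 1 x)) (v' := f') (fun x _ => hφ x) (fun x _ => hd x)
    (key _ hf' hm) ((key _ (hid.mul hf) (measurable_id.mul hfm)).neg.congr
      (Filter.Eventually.of_forall fun x => by simp; ring)) (key _ hf hfm)
  rw [integral_gaussianReal_eq_integral_smul one_ne_zero,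
    integral_gaussianReal_eq_integral_smul one_ne_zero]
  simp only [smul_eq_mul]
  rw [h, ← integral_neg]
  congr 1 with x
  ring

/-- Resampling one coordinate preserves a product of probability measures. -/
lemma measurePreserving_update_pi {ι : Type*} [Fintype ι] [DecidableEq ι] (k : ι) :
    MeasurePreserving (fun p : (ι → ℝ) × ℝ => Function.update p.1 k p.2)
      ((stdGaussianPi ι).prod (gaussianReal 0 1)) (stdGaussianPi ι) := by
  have hm : Measurable (fun p : (ι → ℝ) × ℝ => Function.update p.1 k p.2) := by
    refine measurable_pi_iff.2 fun i => ?_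
    rcases eq_or_ne i k with rfl | h
    · simpa using measurable_snd
    · simp only [Function.update_of_ne h]
      fun_prop
  refine ⟨hm, (Measure.pi_eq fun s hs => ?_).symm⟩
  rw [Measure.map_apply hm (MeasurableSet.univ_pi hs)]
  have hpre : (fun p : (ι → ℝ) × ℝ => Function.update p.1 k p.2) ⁻¹' Set.univ.pi s =
      (Set.univ.pi (Function.update s k Set.univ)) ×ˢ s k := by
    ext p
    simp only [Set.mem_preimage, Set.mem_pi, Set.mem_univ, true_imp_iff, Set.mem_prod]
    constructor
    · refine fun h => ⟨fun i => ?_, by simpa using h k⟩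
      rcases eq_or_ne i k with rfl | hi
      · simp
      · simpa [hi] using h i
    · rintro ⟨h1, h2⟩ i
      rcases eq_or_ne i k with rfl | hi
      · simpa using h2
      · simpa [hi] using h1 i
  rw [hpre, Measure.prod_prod, Measure.pi_pi, ← Finset.mul_prod_erase _ _ (Finset.mem_univ k),
    ← Finset.mul_prod_erase _ (fun i => gaussianReal 0 1 (s i)) (Finset.mem_univ k)]
  simp only [Function.update_self, measure_univ, one_mul]
  rw [mul_comm]
  congr 1
  refine Finset.prod_congr rfl fun i hi => ?_
  rw [Function.update_of_ne (Finset.ne_of_mem_erase hi)]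

/-- Stein's identity for the standard Gaussian measure on `ι → ℝ`. -/
lemma integral_apply_mul_stdGaussianPi {ι : Type*} [Fintype ι] [DecidableEq ι] (k : ι)
    {f f' : (ι → ℝ) → ℝ}
    (hd : ∀ x, HasDerivAt (fun t => f (Function.update x k t)) (f' x) (x k))
    (hf : HasExpGrowth f) (hf' : HasExpGrowth f') (hm : Measurable f) (hm' : Measurable f') :
    ∫ x, x k * f x ∂stdGaussianPi ι = ∫ x, f' x ∂stdGaussianPi ι := by
  have hmp := measurePreserving_update_pi k
  have key : ∀ g : (ι → ℝ) → ℝ, HasExpGrowth g → Measurable g →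
      ∫ x, g x ∂stdGaussianPi ι =
        ∫ x, ∫ t, g (Function.update x k t) ∂gaussianReal 0 1 ∂stdGaussianPi ι := by
    intro g hg hgm
    rw [← hmp.map_eq, integral_map hmp.aemeasurable hgm.aestronglyMeasurable, integral_prod,
      hmp.map_eq]
    exact (hmp.integrable_comp hgm.aestronglyMeasurable).2 (hg.integrable hgm)
  have hsec : ∀ g : (ι → ℝ) → ℝ, HasExpGrowth g → ∀ x,
      HasExpGrowth fun t => g (Function.update x k t) := by
    rintro g ⟨c, C, hc, hC, hb⟩ x
    refine ⟨c, C * Real.exp (c * ‖x‖), hc, by positivity, fun t => (hb _).trans ?_⟩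
    rw [mul_assoc, ← Real.exp_add, ← mul_add]
    gcongr
    refine (pi_norm_le_iff_of_nonneg (by positivity)).2 fun i => ?_
    rcases eq_or_ne i k with rfl | hi
    · simp
    · rw [Function.update_of_ne hi]
      exact (norm_le_pi_norm x i).trans (by simp)
  rw [key _ ((HasExpGrowth.apply k).mul hf) ((measurable_pi_apply k).mul hm), key _ hf' hm']
  congr 1 with x
  simp only [Function.update_self]
  refine integral_id_mul_gaussianReal (fun t => ?_) (hsec f hf x) (hsec f' hf' x)
    (hm'.comp (measurable_update x))
  simpa using hd (Function.update x k t)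

/-- `p` is the gradient of `f` at `y`, in coordinates. -/
def HasGrad {I : Type*} [Fintype I] (f : (I → ℝ) → ℝ) (p y : I → ℝ) : Prop :=
  HasFDerivAt f (∑ i, p i • ContinuousLinearMap.proj (R := ℝ) (φ := fun _ : I => ℝ) i) y

namespace HasGrad

variable {I K : Type*} [Fintype I] [Fintype K] {f g : (I → ℝ) → ℝ} {p q y : I → ℝ}

lemma hasFDerivAt (h : HasGrad f p y) :
    HasFDerivAt f (∑ i, p i • ContinuousLinearMap.proj (R := ℝ) (φ := fun _ : I => ℝ) i) y := h

lemma congr_grad (h : HasGrad f p y) (hpq : ∀ i, p i = q i) : HasGrad f q y := by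
  rwa [← funext hpq]

lemma mul (hf : HasGrad f p y) (hg : HasGrad g q y) :
    HasGrad (fun y => f y * g y) (fun i => f y * q i + g y * p i) y := by
  refine (hf.hasFDerivAt.mul hg.hasFDerivAt).congr_fderiv ?_
  ext v
  simp [Finset.mul_sum, Finset.sum_add_distrib, add_mul, mul_assoc]

lemma const_mul (c : ℝ) (hf : HasGrad f p y) : HasGrad (fun y => c * f y) (fun i => c * p i) y := by
  refine (hf.hasFDerivAt.const_mul c).congr_fderiv ?_
  ext v
  simp [Finset.mul_sum, mul_assoc]

lemma exp (hf : HasGrad f p y) :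
    HasGrad (fun y => Real.exp (f y)) (fun i => Real.exp (f y) * p i) y := by
  refine hf.hasFDerivAt.exp.congr_fderiv ?_
  ext v
  simp [Finset.mul_sum, mul_assoc]

lemma sum {F : K → (I → ℝ) → ℝ} {P : K → I → ℝ} (h : ∀ k, HasGrad (F k) (P k) y) :
    HasGrad (fun y => ∑ k, F k y) (fun i => ∑ k, P k i) y := by
  refine (HasFDerivAt.fun_sum fun k _ => (h k).hasFDerivAt).congr_fderiv ?_
  ext v
  simp only [_root_.sum_apply, _root_.smul_apply, ContinuousLinearMap.proj_apply,
    smul_eq_mul, Finset.sum_mul]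
  exact Finset.sum_comm

lemma apply [DecidableEq I] (i : I) : HasGrad (fun y : I → ℝ => y i) (Pi.single i 1) y := by
  refine (hasFDerivAt_apply i y).congr_fderiv ?_
  ext v
  simp [Pi.single_apply]

lemma comp {F : (K → ℝ) → ℝ} {P : K → ℝ} {G : (I → ℝ) → K → ℝ} {Q : K → I → ℝ}
    (hF : HasGrad F P (G y)) (hG : ∀ k, HasGrad (fun y => G y k) (Q k) y) :
    HasGrad (fun y => F (G y)) (fun i => ∑ k, P k * Q k i) y := by
  refine (hF.hasFDerivAt.comp y (hasFDerivAt_pi.2 fun k => (hG k).hasFDerivAt)).congr_fderiv ?_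
  ext v
  simp only [ContinuousLinearMap.comp_apply, _root_.sum_apply, _root_.smul_apply,
    ContinuousLinearMap.proj_apply, ContinuousLinearMap.pi_apply, smul_eq_mul, Finset.sum_mul,
    Finset.mul_sum]
  rw [Finset.sum_comm]
  exact Finset.sum_congr rfl fun i _ => Finset.sum_congr rfl fun k _ => by ring

end HasGrad

/-- Gaussian comparison: if `∑ (Cov Y - Cov Z)ᵢⱼ ∂ᵢⱼΨ ≤ 0` then `E Ψ(Y) ≤ E Ψ(Z)`. Here `P` and `H`
are the first and second partial derivatives of `Ψ`. -/
theorem gaussian_comparison {I J : Type*} [Fintype I] [Fintype J]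
    {Ψ : (I → ℝ) → ℝ} {P : I → (I → ℝ) → ℝ} {H : I → I → (I → ℝ) → ℝ}
    (hΨ : ∀ y, HasGrad Ψ (fun i => P i y) y) (hP : ∀ i y, HasGrad (P i) (fun j => H i j y) y)
    (hH : ∀ i j, Continuous (H i j))
    (gΨ : HasExpGrowth Ψ) (gP : ∀ i, HasExpGrowth (P i)) (gH : ∀ i j, HasExpGrowth (H i j))
    (a b : I → J → ℝ) (hab : ∀ i j, a i ⬝ᵥ b j = 0)
    (hneg : ∀ y, ∑ i, ∑ j, (a i ⬝ᵥ a j - b i ⬝ᵥ b j) * H i j y ≤ 0) :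
    ∫ ω, Ψ (fun i => a i ⬝ᵥ ω) ∂stdGaussianPi J ≤ ∫ ω, Ψ (fun i => b i ⬝ᵥ ω) ∂stdGaussianPi J := by
  classical
  have cΨ : Continuous Ψ := continuous_iff_continuousAt.2 fun y => (hΨ y).hasFDerivAt.continuousAt
  have cP : ∀ i, Continuous (P i) := fun i =>
    continuous_iff_continuousAt.2 fun y => (hP i y).hasFDerivAt.continuousAt
  set c : ℝ → I → J → ℝ := fun θ i => Real.cos θ • b i + Real.sin θ • a i with hc
  set c' : ℝ → I → J → ℝ := fun θ i => -Real.sin θ • b i + Real.cos θ • a i with hc'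
  set W : ℝ → (J → ℝ) → I → ℝ := fun θ ω i => c θ i ⬝ᵥ ω with hW
  obtain ⟨D, hD0, hDc, hDc'⟩ : ∃ D : ℝ, 0 ≤ D ∧ (∀ θ ω i, |c θ i ⬝ᵥ ω| ≤ D * ‖ω‖) ∧
      (∀ θ ω i, |c' θ i ⬝ᵥ ω| ≤ D * ‖ω‖) := by
    have hD : ∀ (s t : ℝ) (_ : |s| ≤ 1) (_ : |t| ≤ 1) (ω : J → ℝ) (i : I),
        |(s • b i + t • a i) ⬝ᵥ ω| ≤ (∑ i, ∑ k, (|b i k| + |a i k|)) * ‖ω‖ := by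
      intro s t hs ht ω i
      calc |(s • b i + t • a i) ⬝ᵥ ω| ≤ ∑ k, |(s • b i + t • a i) k * ω k| :=
            Finset.abs_sum_le_sum_abs _ _
        _ ≤ ∑ k, (|b i k| + |a i k|) * ‖ω‖ := by
            refine Finset.sum_le_sum fun k _ => ?_
            rw [abs_mul]
            refine mul_le_mul ?_ (norm_le_pi_norm ω k) (abs_nonneg _) (by positivity)
            simp only [Pi.add_apply, Pi.smul_apply, smul_eq_mul]
            refine (abs_add_le _ _).trans ?_
            rw [abs_mul, abs_mul]
            exact add_le_add (mul_le_of_le_one_left (abs_nonneg _) hs)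
              (mul_le_of_le_one_left (abs_nonneg _) ht)
        _ = (∑ k, (|b i k| + |a i k|)) * ‖ω‖ := by rw [Finset.sum_mul]
        _ ≤ _ := by
            gcongr
            exact Finset.single_le_sum (f := fun i => ∑ k, (|b i k| + |a i k|))
              (fun i _ => Finset.sum_nonneg fun k _ => by positivity) (Finset.mem_univ i)
    refine ⟨_, Finset.sum_nonneg fun i _ => Finset.sum_nonneg fun k _ => by positivity,
      fun θ ω i => hD _ _ (Real.abs_cos_le_one θ) (Real.abs_sin_le_one θ) ω i,
      fun θ ω i => hD _ _ ?_ (Real.abs_cos_le_one θ) ω i⟩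
    rw [abs_neg]
    exact Real.abs_sin_le_one θ
  have hWn : ∀ θ ω, ‖W θ ω‖ ≤ D * ‖ω‖ := fun θ ω =>
    (pi_norm_le_iff_of_nonneg (by positivity)).2 fun i => hDc θ ω i
  have hWc : ∀ θ, Continuous (W θ) := fun θ => by
    simp only [hW, dotProduct]; fun_prop
  have hWd : ∀ θ ω, HasDerivAt (fun θ => W θ ω) (fun i => c' θ i ⬝ᵥ ω) θ := by
    intro θ ω
    refine hasDerivAt_pi.2 fun i => ?_
    simp only [hW, hc, hc', add_dotProduct, smul_dotProduct, smul_eq_mul]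
    exact ((Real.hasDerivAt_cos θ).mul_const _).add ((Real.hasDerivAt_sin θ).mul_const _)
  have hΨd : ∀ θ ω, HasDerivAt (fun θ => Ψ (W θ ω)) (∑ i, P i (W θ ω) * (c' θ i ⬝ᵥ ω)) θ := by
    intro θ ω
    refine ((hΨ (W θ ω)).hasFDerivAt.comp_hasDerivAt θ (hWd θ ω)).congr_deriv ?_
    simp
  have gW : ∀ f : (I → ℝ) → ℝ, HasExpGrowth f → ∀ θ, HasExpGrowth fun ω => f (W θ ω) :=
    fun f hf θ => hf.comp _ D hD0 (hWn θ)
  -- the derivative of the interpolation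
  have hderiv : ∀ θ, HasDerivAt (fun θ => ∫ ω, Ψ (W θ ω) ∂stdGaussianPi J)
      (∫ ω, ∑ i, P i (W θ ω) * (c' θ i ⬝ᵥ ω) ∂stdGaussianPi J) θ := by
    intro θ
    choose q Q hq hQ hb using gP
    have gB : HasExpGrowth fun ω : J → ℝ =>
        ∑ i, (Q i * Real.exp (q i * (D * ‖ω‖))) * (D * ‖ω‖) := by
      refine HasExpGrowth.sum _ fun i _ => HasExpGrowth.mul ?_ ?_
      · refine ⟨q i * D, Q i, mul_nonneg (hq i) hD0, hQ i, fun ω => ?_⟩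
        rw [abs_of_nonneg (mul_nonneg (hQ i) (Real.exp_pos _).le), mul_assoc]
      · exact HasExpGrowth.of_linear_bound 0 D le_rfl hD0 fun ω => by
          rw [abs_of_nonneg (by positivity)]; simp
    refine (hasDerivAt_integral_of_dominated_loc_of_deriv_le (s := Set.univ)
      (F := fun θ ω => Ψ (W θ ω)) (F' := fun θ ω => ∑ i, P i (W θ ω) * (c' θ i ⬝ᵥ ω))
      (bound := fun ω => ∑ i, (Q i * Real.exp (q i * (D * ‖ω‖))) * (D * ‖ω‖))
      Filter.univ_mem ?_ ?_ ?_ ?_ ?_ ?_).2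
    · exact Filter.Eventually.of_forall fun θ => (cΨ.comp (hWc θ)).aestronglyMeasurable
    · exact (gW Ψ gΨ θ).integrable (cΨ.comp (hWc θ)).measurable
    · refine Continuous.aestronglyMeasurable ?_
      refine continuous_finsetSum _ fun i _ => ((cP i).comp (hWc θ)).mul ?_
      exact continuous_const.dotProduct continuous_id
    · refine Filter.Eventually.of_forall fun ω θ _ => ?_
      refine (Finset.abs_sum_le_sum_abs _ _).trans (Finset.sum_le_sum fun i _ => ?_)
      rw [abs_mul]
      refine mul_le_mul ((hb i _).trans ?_) (hDc' θ ω i) (abs_nonneg _)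
        (mul_nonneg (hQ i) (Real.exp_pos _).le)
      exact mul_le_mul_of_nonneg_left
        (Real.exp_le_exp.2 (mul_le_mul_of_nonneg_left (hWn θ ω) (hq i))) (hQ i)
    · exact gB.integrable (by fun_prop)
    · exact Filter.Eventually.of_forall fun ω θ _ => hΨd θ ω
  -- its value, by Stein's identity
  have hstein : ∀ θ, ∫ ω, ∑ i, P i (W θ ω) * (c' θ i ⬝ᵥ ω) ∂stdGaussianPi J =
      ∫ ω, (Real.sin θ * Real.cos θ) *
        ∑ i, ∑ j, (a i ⬝ᵥ a j - b i ⬝ᵥ b j) * H i j (W θ ω) ∂stdGaussianPi J := by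
    intro θ
    have mP : ∀ i, Measurable fun ω => P i (W θ ω) := fun i => ((cP i).comp (hWc θ)).measurable
    have mH : ∀ i j, Measurable fun ω => H i j (W θ ω) :=
      fun i j => ((hH i j).comp (hWc θ)).measurable
    have iH : ∀ i j, Integrable (fun ω => H i j (W θ ω)) (stdGaussianPi J) :=
      fun i j => (gW _ (gH i j) θ).integrable (mH i j)
    have iP : ∀ i k, Integrable (fun ω : J → ℝ => ω k * P i (W θ ω)) (stdGaussianPi J) :=
      fun i k => ((HasExpGrowth.apply k).mul (gW _ (gP i) θ)).integrable
        ((measurable_pi_apply k).mul (mP i))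
    have hst : ∀ i k, ∫ ω : J → ℝ, ω k * P i (W θ ω) ∂stdGaussianPi J =
        ∫ ω, ∑ j, H i j (W θ ω) * c θ j k ∂stdGaussianPi J := by
      intro i k
      refine integral_apply_mul_stdGaussianPi k (fun ω => ?_) (gW _ (gP i) θ) ?_ (mP i)
        (Finset.measurable_sum _ fun j _ => (mH i j).mul_const _)
      · have h1 : HasDerivAt (fun t => W θ (Function.update ω k t)) (fun j => c θ j k) (ω k) := by
          refine hasDerivAt_pi.2 fun j => ?_
          have h2 : (fun t => W θ (Function.update ω k t) j) =
              fun t => c θ j k * t + c θ j ⬝ᵥ Function.update ω k 0 := by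
            ext t
            simp only [hW, dotProduct]
            rw [← Finset.add_sum_erase _ _ (Finset.mem_univ k),
              ← Finset.add_sum_erase _ (fun x => c θ j x * Function.update ω k 0 x)
                (Finset.mem_univ k)]
            simp only [Function.update_self, mul_zero, zero_add]
            congr 1
            refine Finset.sum_congr rfl fun l hl => ?_
            rw [Function.update_of_ne (Finset.ne_of_mem_erase hl),
              Function.update_of_ne (Finset.ne_of_mem_erase hl)]
          rw [h2]
          exact (((hasDerivAt_id (ω k)).const_mul (c θ j k)).add_const _).congr_deriv (by simp)
        have h3 := (hP i (W θ (Function.update ω k (ω k)))).hasFDerivAt.comp_hasDerivAt (ω k) h1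
        refine h3.congr_deriv ?_
        simp
      · exact HasExpGrowth.sum _ fun j _ => (gW _ (gH i j) θ).mul
          (HasExpGrowth.of_bounded |c θ j k| fun _ => le_rfl)
    have hcc : ∀ i j, ∑ k, c' θ i k * c θ j k =
        (Real.sin θ * Real.cos θ) * (a i ⬝ᵥ a j - b i ⬝ᵥ b j) := by
      intro i j
      change c' θ i ⬝ᵥ c θ j = _
      simp only [hc, hc', add_dotProduct, dotProduct_add, smul_dotProduct, dotProduct_smul,
        smul_eq_mul, hab, dotProduct_comm (b i) (a j)]
      ring
    calc ∫ ω, ∑ i, P i (W θ ω) * (c' θ i ⬝ᵥ ω) ∂stdGaussianPi J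
        = ∫ ω, ∑ i, ∑ k, c' θ i k * (ω k * P i (W θ ω)) ∂stdGaussianPi J := by
          congr 1 with ω
          refine Finset.sum_congr rfl fun i _ => ?_
          rw [dotProduct, Finset.mul_sum]
          exact Finset.sum_congr rfl fun k _ => by ring
      _ = ∑ i, ∑ k, c' θ i k * ∫ ω, ∑ j, H i j (W θ ω) * c θ j k ∂stdGaussianPi J := by
          rw [integral_finsetSum _ fun i _ =>
            integrable_finsetSum _ fun k _ => (iP i k).const_mul _]
          refine Finset.sum_congr rfl fun i _ => ?_
          rw [integral_finsetSum _ fun k _ => (iP i k).const_mul _]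
          exact Finset.sum_congr rfl fun k _ => by rw [integral_const_mul, hst]
      _ = ∑ i, ∑ j, (∑ k, c' θ i k * c θ j k) * ∫ ω, H i j (W θ ω) ∂stdGaussianPi J := by
          refine Finset.sum_congr rfl fun i _ => ?_
          simp_rw [Finset.sum_mul]
          rw [Finset.sum_comm]
          refine Finset.sum_congr rfl fun k _ => ?_
          rw [integral_finsetSum _ fun j _ => (iH i j).mul_const _, Finset.mul_sum]
          exact Finset.sum_congr rfl fun j _ => by rw [integral_mul_const]; ring
      _ = _ := by
          rw [integral_const_mul, integral_finsetSum _ fun i _ =>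
            integrable_finsetSum _ fun j _ => (iH i j).const_mul _, Finset.mul_sum]
          refine Finset.sum_congr rfl fun i _ => ?_
          rw [integral_finsetSum _ fun j _ => (iH i j).const_mul _, Finset.mul_sum]
          exact Finset.sum_congr rfl fun j _ => by rw [hcc, integral_const_mul]; ring
  have hanti : AntitoneOn (fun θ => ∫ ω, Ψ (W θ ω) ∂stdGaussianPi J)
      (Set.Icc 0 (Real.pi / 2)) := by
    refine antitoneOn_of_deriv_nonpos (convex_Icc _ _)
      (fun θ _ => (hderiv θ).continuousAt.continuousWithinAt)
      (fun θ _ => (hderiv θ).differentiableAt.differentiableWithinAt) fun θ hθ => ?_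
    rw [interior_Icc] at hθ
    rw [(hderiv θ).deriv, hstein]
    refine integral_nonpos fun ω => mul_nonpos_of_nonneg_of_nonpos (mul_nonneg ?_ ?_) (hneg _)
    · exact Real.sin_nonneg_of_nonneg_of_le_pi hθ.1.le (by linarith [hθ.2, Real.pi_pos])
    · exact Real.cos_nonneg_of_neg_pi_div_two_le_of_le (by linarith [hθ.1, Real.pi_pos]) hθ.2.le
  have h := hanti (Set.left_mem_Icc.2 (by positivity)) (Set.right_mem_Icc.2 (by positivity))
    (by positivity : (0 : ℝ) ≤ Real.pi / 2)
  simpa [hW, hc] using h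

/-- The smooth maximum `β⁻¹ log ∑ exp (β yᵢ)`. -/
def lse {I : Type*} [Fintype I] (β : ℝ) (y : I → ℝ) : ℝ :=
  β⁻¹ * Real.log (∑ i, Real.exp (β * y i))

/-- The gradient of `lse`. -/
def softmax {I : Type*} [Fintype I] (β : ℝ) (i : I) (y : I → ℝ) : ℝ :=
  Real.exp (β * y i - β * lse β y)

lemma abs_ciSup_le {I : Type*} [Finite I] [h0 : Nonempty I] {y : I → ℝ} {D : ℝ}
    (h : ∀ i, |y i| ≤ D) : |⨆ i, y i| ≤ D :=
  h0.elim fun i => abs_le.2 ⟨(abs_le.1 (h i)).1.trans (le_ciSup (Set.finite_range y).bddAbove i),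
    ciSup_le fun i => (abs_le.1 (h i)).2⟩

lemma softmax_nonneg {I : Type*} [Fintype I] {β : ℝ} (i : I) (y : I → ℝ) : 0 ≤ softmax β i y :=
  (Real.exp_pos _).le

/-- The gradient of a function of one row of a matrix. -/
lemma HasGrad.comp_row {I K : Type*} [Fintype I] [Fintype K] [DecidableEq K]
    {f : (I → ℝ) → ℝ} {p : I → ℝ}
    {y : K × I → ℝ} (k : K) (hf : HasGrad f p fun i => y (k, i)) :
    HasGrad (fun y : K × I → ℝ => f fun i => y (k, i))
      (fun q => if k = q.1 then p q.2 else 0) y := by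
  classical
  refine (HasGrad.comp (G := fun y : K × I → ℝ => fun i => y (k, i)) hf
    fun i => HasGrad.apply (k, i)).congr_grad fun q => ?_
  obtain ⟨l, j⟩ := q
  simp only [Pi.single_apply, Prod.mk.injEq, mul_ite, mul_one, mul_zero]
  rcases eq_or_ne k l with rfl | h
  · simp
  · simp [h, h.symm]

section LogSumExp

variable {I : Type*} [Fintype I] [Nonempty I] {β : ℝ}

lemma sum_exp_pos (β : ℝ) (y : I → ℝ) : 0 < ∑ i, Real.exp (β * y i) :=
  Finset.sum_pos (fun _ _ => Real.exp_pos _) Finset.univ_nonempty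

lemma exp_mul_lse (hβ : 0 < β) (y : I → ℝ) : Real.exp (β * lse β y) = ∑ i, Real.exp (β * y i) := by
  rw [lse, mul_inv_cancel_left₀ hβ.ne', Real.exp_log (sum_exp_pos β y)]

lemma softmax_eq_div (hβ : 0 < β) (i : I) (y : I → ℝ) :
    softmax β i y = Real.exp (β * y i) / ∑ j, Real.exp (β * y j) := by
  rw [softmax, Real.exp_sub, exp_mul_lse hβ]

lemma sum_softmax (hβ : 0 < β) (y : I → ℝ) : ∑ i, softmax β i y = 1 := by
  simp_rw [softmax_eq_div hβ]
  rw [← Finset.sum_div, div_self (sum_exp_pos β y).ne']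

lemma softmax_le_one (hβ : 0 < β) (i : I) (y : I → ℝ) : softmax β i y ≤ 1 := by
  rw [← sum_softmax hβ y]
  exact Finset.single_le_sum (f := fun i => softmax β i y) (fun j _ => softmax_nonneg j y)
    (Finset.mem_univ i)

lemma abs_softmax_le_one (hβ : 0 < β) (i : I) (y : I → ℝ) : |softmax β i y| ≤ 1 := by
  rw [abs_of_nonneg (softmax_nonneg i y)]
  exact softmax_le_one hβ i y

lemma hasGrad_lse (hβ : 0 < β) (y : I → ℝ) : HasGrad (lse β) (fun i => softmax β i y) y := by
  classical
  have h1 : HasGrad (fun y : I → ℝ => ∑ i, Real.exp (β * y i)) _ y :=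
    HasGrad.sum fun i => ((HasGrad.apply i).const_mul β).exp
  have h2 := (h1.hasFDerivAt.log (sum_exp_pos β y).ne').const_mul β⁻¹
  refine h2.congr_fderiv ?_
  ext v
  simp only [_root_.smul_apply, _root_.sum_apply, ContinuousLinearMap.proj_apply,
    smul_eq_mul, Finset.mul_sum, softmax_eq_div hβ]
  refine Finset.sum_congr rfl fun i _ => ?_
  simp only [Pi.single_apply, mul_ite, mul_one, mul_zero, Finset.sum_ite_eq, Finset.mem_univ,
    if_true]
  have := (sum_exp_pos β y).ne'
  field_simp

lemma hasGrad_softmax [DecidableEq I] (hβ : 0 < β) (i : I) (y : I → ℝ) :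
    HasGrad (softmax β i)
      (fun j => β * softmax β i y * ((if i = j then 1 else 0) - softmax β j y)) y := by
  have h1 : HasGrad (fun y : I → ℝ => β * y i + -β * lse β y)
      (fun j => β * (Pi.single i 1 : I → ℝ) j + -β * softmax β j y) y := by
    refine (((HasGrad.apply i).const_mul β).hasFDerivAt.add
      ((hasGrad_lse hβ y).const_mul (-β)).hasFDerivAt).congr_fderiv ?_
    ext v
    simp [add_mul, Finset.sum_add_distrib, -neg_mul]
  have h2 : softmax β i = fun y : I → ℝ => Real.exp (β * y i + -β * lse β y) := by
    ext y
    rw [softmax]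
    ring_nf
  have h3 := h1.exp
  rw [← h2] at h3
  refine h3.congr_grad fun j => ?_
  rw [← congrFun h2 y]
  simp only [Pi.single_apply, eq_comm (a := i)]
  ring

lemma le_lse (hβ : 0 < β) (y : I → ℝ) : ⨆ i, y i ≤ lse β y := by
  refine ciSup_le fun i => ?_
  rw [← mul_le_mul_iff_right₀ hβ, ← Real.exp_le_exp, exp_mul_lse hβ]
  exact Finset.single_le_sum (f := fun i => Real.exp (β * y i)) (fun j _ => (Real.exp_pos _).le)
    (Finset.mem_univ i)

lemma lse_le (hβ : 0 < β) (y : I → ℝ) :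
    lse β y ≤ (⨆ i, y i) + Real.log (Fintype.card I) / β := by
  rw [← mul_le_mul_iff_right₀ hβ, ← Real.exp_le_exp, exp_mul_lse hβ, mul_add, Real.exp_add,
    mul_div_cancel₀ _ hβ.ne', Real.exp_log (by exact_mod_cast Fintype.card_pos), mul_comm]
  calc ∑ i, Real.exp (β * y i) ≤ ∑ _i : I, Real.exp (β * ⨆ i, y i) := by
        refine Finset.sum_le_sum fun i _ => Real.exp_le_exp.2 ?_
        exact mul_le_mul_of_nonneg_left (le_ciSup (Set.finite_range y).bddAbove i) hβ.le
    _ = _ := by simp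

lemma abs_lse_le (hβ : 0 < β) (y : I → ℝ) :
    |lse β y| ≤ Real.log (Fintype.card I) / β + ‖y‖ := by
  have h1 := abs_le.1 (abs_ciSup_le (y := y) (D := ‖y‖) fun i => norm_le_pi_norm y i)
  have h2 : 0 ≤ Real.log (Fintype.card I) / β :=
    div_nonneg (Real.log_nonneg (by exact_mod_cast Fintype.card_pos)) hβ.le
  have h3 := le_lse hβ y
  have h4 := lse_le hβ y
  exact abs_le.2 ⟨by linarith [h1.1], by linarith [h1.2]⟩

lemma continuous_lse (hβ : 0 < β) : Continuous (lse β : (I → ℝ) → ℝ) :=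
  continuous_iff_continuousAt.2 fun y => (hasGrad_lse hβ y).hasFDerivAt.continuousAt

lemma continuous_softmax (hβ : 0 < β) (i : I) : Continuous (softmax β i) := by
  classical
  exact continuous_iff_continuousAt.2 fun y => (hasGrad_softmax hβ i y).hasFDerivAt.continuousAt

end LogSumExp

/-- Independence of the two blocks of a standard Gaussian vector. -/
lemma integral_mul_stdGaussianPi_sum {ι κ : Type*} [Fintype ι] [Fintype κ]
    (f : (ι → ℝ) → ℝ) (g : (κ → ℝ) → ℝ) :
    ∫ ω, f (fun i => ω (Sum.inl i)) * g (fun j => ω (Sum.inr j)) ∂stdGaussianPi (ι ⊕ κ) =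
      (∫ ω, f ω ∂stdGaussianPi ι) * ∫ ω, g ω ∂stdGaussianPi κ := by
  have h := measurePreserving_sumPiEquivProdPi (X := fun _ : ι ⊕ κ => ℝ)
    fun _ => gaussianReal 0 1
  rw [← integral_prod_mul]
  exact h.integral_comp' (g := fun p : (ι → ℝ) × (κ → ℝ) => f p.1 * g p.2)

/-- The moment generating function of one standard Gaussian coordinate. -/
lemma integral_exp_mul_stdGaussianPi_unit (t : ℝ) :
    ∫ ω : Unit → ℝ, Real.exp (t * ω ()) ∂stdGaussianPi Unit = Real.exp (t ^ 2 / 2) := by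
  have h := integral_fintype_prod_eq_prod (𝕜 := ℝ) (μ := fun _ : Unit => gaussianReal 0 1)
    (fun (_ : Unit) y => Real.exp (t * y))
  simp only [Finset.univ_unique, Finset.prod_singleton] at h
  refine h.trans ?_
  have h2 := congrFun (mgf_fun_id_gaussianReal (μ := 0) (v := 1)) t
  simp only [mgf] at h2
  rw [h2]
  simp

lemma abs_ciSup_sub_le {I : Type*} [Finite I] [Nonempty I] {y z : I → ℝ} {D : ℝ}
    (h : ∀ i, |y i - z i| ≤ D) : |(⨆ i, y i) - ⨆ i, z i| ≤ D := by
  refine abs_le.2 ⟨?_, ?_⟩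
  · have : ⨆ i, z i ≤ (⨆ i, y i) + D := ciSup_le fun i => by
      linarith [(abs_le.1 (h i)).1, le_ciSup (Set.finite_range y).bddAbove i]
    linarith
  · have : ⨆ i, y i ≤ (⨆ i, z i) + D := ciSup_le fun i => by
      linarith [(abs_le.1 (h i)).2, le_ciSup (Set.finite_range z).bddAbove i]
    linarith

lemma abs_lse_sub_ciSup_le {I : Type*} [Fintype I] [Nonempty I] {β : ℝ} (hβ : 0 < β)
    (y : I → ℝ) : |lse β y - ⨆ i, y i| ≤ Real.log (Fintype.card I) / β := by
  have h := le_lse hβ y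
  rw [abs_of_nonneg (by linarith)]
  linarith [lse_le hβ y]

lemma dotProduct_le_one {N : Type*} [Fintype N] {x y : N → ℝ} (hx : x ⬝ᵥ x = 1)
    (hy : y ⬝ᵥ y = 1) : x ⬝ᵥ y ≤ 1 := by
  have h : 0 ≤ (x - y) ⬝ᵥ (x - y) := Finset.sum_nonneg fun i _ => mul_self_nonneg _
  simp only [sub_dotProduct, dotProduct_sub, hx, hy, dotProduct_comm y x] at h
  linarith

lemma measurable_minmax {K U : Type*} [Finite K] [Finite U] (r : ℝ) :
    Measurable fun y : K × U → ℝ => ⨆ k, r * ⨆ l, y (k, l) :=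
  .iSup fun k => (Measurable.iSup fun l => measurable_pi_apply (k, l)).const_mul r

section Gordon

variable {K U : Type*} [Fintype K] [Fintype U] [Nonempty K] [Nonempty U] {β : ℝ}

/-- Smooth version of `maxₖ r maxₗ y (k, l)`. -/
def minmaxLse (β r : ℝ) (y : K × U → ℝ) : ℝ :=
  lse β fun k => r * lse β fun l => y (k, l)

/-- The weight of the row `k` in the gradient of `minmaxLse`. -/
def rowWeight (β r : ℝ) (k : K) (y : K × U → ℝ) : ℝ :=
  softmax β k fun k => r * lse β fun l => y (k, l)

lemma hasGrad_row {K : Type*} [Fintype K] [DecidableEq K] (hβ : 0 < β) (r : ℝ) (k : K) (y : K × U → ℝ) :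
    HasGrad (fun y : K × U → ℝ => r * lse β fun l => y (k, l))
      (fun q => if k = q.1 then r * softmax β q.2 (fun l => y (k, l)) else 0) y :=
  (HasGrad.comp_row k ((hasGrad_lse hβ _).const_mul r))

lemma hasGrad_minmaxLse (hβ : 0 < β) (r : ℝ) (y : K × U → ℝ) :
    HasGrad (minmaxLse β r)
      (fun q => r * (rowWeight β r q.1 y * softmax β q.2 fun l => y (q.1, l))) y := by
  classical
  refine (HasGrad.comp (hasGrad_lse hβ _) (fun k => hasGrad_row hβ r k y)).congr_grad fun q => ?_
  simp only [mul_ite, mul_zero, Finset.sum_ite_eq', Finset.mem_univ, if_true, rowWeight]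
  ring

lemma hasGrad_rowWeight [DecidableEq K] (hβ : 0 < β) (r : ℝ) (k : K) (y : K × U → ℝ) :
    HasGrad (rowWeight β r k)
      (fun q => β * rowWeight β r k y * ((if k = q.1 then 1 else 0) - rowWeight β r q.1 y) *
        (r * softmax β q.2 fun l => y (q.1, l))) y := by
  refine (HasGrad.comp (hasGrad_softmax hβ k _) (fun k => hasGrad_row hβ r k y)).congr_grad
    fun q => ?_
  simp only [mul_ite, mul_zero, Finset.sum_ite_eq', Finset.mem_univ, if_true, rowWeight]

lemma abs_minmaxLse_sub_le (hβ : 0 < β) {r : ℝ} (hr : |r| = 1) (y : K × U → ℝ) :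
    |minmaxLse β r y - ⨆ k, r * ⨆ l, y (k, l)| ≤
      (Real.log (Fintype.card K) + Real.log (Fintype.card U)) / β := by
  have h1 := abs_lse_sub_ciSup_le hβ fun k : K => r * lse β fun l => y (k, l)
  have h2 : |(⨆ k, r * lse β fun l => y (k, l)) - ⨆ k, r * ⨆ l, y (k, l)| ≤
      Real.log (Fintype.card U) / β := by
    refine abs_ciSup_sub_le fun k => ?_
    rw [← mul_sub, abs_mul, hr, one_mul]
    exact abs_lse_sub_ciSup_le hβ _
  rw [add_div]
  exact (abs_sub_le _ _ _).trans (add_le_add h1 h2)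

lemma abs_minmax_le {r : ℝ} (hr : |r| = 1) (y : K × U → ℝ) :
    |⨆ k, r * ⨆ l, y (k, l)| ≤ ‖y‖ := by
  refine abs_ciSup_le fun k => ?_
  rw [abs_mul, hr, one_mul]
  exact abs_ciSup_le fun l => norm_le_pi_norm y (k, l)

lemma smooth_minmax_comparison (hβ : 0 < β) {t r : ℝ} (hr : |r| = 1) (ht : 0 < t) (htβ : t ≤ β)
    {J : Type*} [Fintype J] (a b : K × U → J → ℝ) (hab : ∀ i j, a i ⬝ᵥ b j = 0)
    (hrow : ∀ k l l', a (k, l) ⬝ᵥ a (k, l') = b (k, l) ⬝ᵥ b (k, l'))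
    (hcov : ∀ i j, b i ⬝ᵥ b j ≤ a i ⬝ᵥ a j) :
    ∫ ω, Real.exp (t * minmaxLse β r fun i => a i ⬝ᵥ ω) ∂stdGaussianPi J ≤
      ∫ ω, Real.exp (t * minmaxLse β r fun i => b i ⬝ᵥ ω) ∂stdGaussianPi J := by
  classical
  set Ψ : (K × U → ℝ) → ℝ := fun y => Real.exp (t * minmaxLse β r y) with hΨ
  set w : K × U → (K × U → ℝ) → ℝ := fun q y =>
    rowWeight β r q.1 y * softmax β q.2 fun l => y (q.1, l) with hw
  set w' : K × U → K × U → (K × U → ℝ) → ℝ := fun p q y =>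
    rowWeight β r p.1 y * (if p.1 = q.1 then β * (softmax β p.2 fun l => y (p.1, l)) *
        ((if p.2 = q.2 then 1 else 0) - softmax β q.2 fun l => y (p.1, l)) else 0) +
      (softmax β p.2 fun l => y (p.1, l)) * (β * rowWeight β r p.1 y *
        ((if p.1 = q.1 then 1 else 0) - rowWeight β r q.1 y) *
        (r * softmax β q.2 fun l => y (q.1, l))) with hw'
  have dΨ : ∀ y, HasGrad Ψ (fun q => Ψ y * (t * (r * w q y))) y := fun y =>
    ((hasGrad_minmaxLse hβ r y).const_mul t).exp
  have dw : ∀ p y, HasGrad (w p) (fun q => w' p q y) y := fun p y =>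
    (hasGrad_rowWeight hβ r p.1 y).mul (HasGrad.comp_row p.1 (hasGrad_softmax hβ p.2 _))
  have cΨ : Continuous Ψ :=
    continuous_iff_continuousAt.2 fun y => (dΨ y).hasFDerivAt.continuousAt
  have cw : ∀ p, Continuous (w p) := fun p =>
    continuous_iff_continuousAt.2 fun y => (dw p y).hasFDerivAt.continuousAt
  have cσ : ∀ k l, Continuous fun y : K × U → ℝ => softmax β l fun l => y (k, l) :=
    fun k l => (continuous_softmax hβ l).comp (by fun_prop)
  have cπ : ∀ k, Continuous fun y : K × U → ℝ => rowWeight β r k y := fun k =>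
    continuous_iff_continuousAt.2 fun y => (hasGrad_rowWeight hβ r k y).hasFDerivAt.continuousAt
  have cw' : ∀ p q, Continuous (w' p q) := by
    intro p q
    refine ((cπ _).mul ?_).add ((cσ _ _).mul (((continuous_const.mul (cπ _)).mul
      (continuous_const.sub (cπ _))).mul (continuous_const.mul (cσ _ _))))
    split_ifs
    · exact (continuous_const.mul (cσ _ _)).mul (continuous_const.sub (cσ _ _))
    · exact (continuous_const.mul (cσ _ _)).mul (continuous_const.sub (cσ _ _))
    · exact continuous_const
  have bσ : ∀ k l, HasExpGrowth fun y : K × U → ℝ => softmax β l fun l => y (k, l) :=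
    fun k l => .of_bounded 1 fun y => abs_softmax_le_one hβ _ _
  have bπ : ∀ k, HasExpGrowth fun y : K × U → ℝ => rowWeight β r k y :=
    fun k => .of_bounded 1 fun y => abs_softmax_le_one hβ _ _
  have bc : ∀ s : ℝ, HasExpGrowth fun _ : K × U → ℝ => s := fun s => .of_bounded |s| fun _ => le_rfl
  have bsub : ∀ (s : ℝ) (f : (K × U → ℝ) → ℝ), HasExpGrowth f → HasExpGrowth fun y => s - f y := by
    intro s f hf
    simpa [sub_eq_add_neg] using (bc s).add (hf.mono (f := fun y => -f y) fun y => by simp)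
  have bw' : ∀ p q, HasExpGrowth (w' p q) := by
    intro p q
    refine ((bπ _).mul ?_).add ((bσ _ _).mul ((((bc _).mul (bπ _)).mul
      (bsub _ _ (bπ _))).mul ((bc _).mul (bσ _ _))))
    split_ifs
    · exact ((bc _).mul (bσ _ _)).mul (bsub _ _ (bσ _ _))
    · exact ((bc _).mul (bσ _ _)).mul (bsub _ _ (bσ _ _))
    · exact bc 0
  have bw : ∀ p, HasExpGrowth (w p) := fun p => (bπ _).mul (bσ _ _)
  have bΨ : HasExpGrowth Ψ := by
    refine HasExpGrowth.exp_of_linear_bound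
      (t * ((Real.log (Fintype.card K) + Real.log (Fintype.card U)) / β)) t ht.le fun y => ?_
    rw [abs_mul, abs_of_pos ht, ← mul_add]
    refine mul_le_mul_of_nonneg_left ?_ ht.le
    have h1 := abs_minmaxLse_sub_le hβ hr y
    have h2 := abs_minmax_le hr y
    have h3 := abs_sub_abs_le_abs_sub (minmaxLse β r y) (⨆ k, r * ⨆ l, y (k, l))
    linarith
  refine gaussian_comparison (Ψ := Ψ) (P := fun p y => Ψ y * (t * (r * w p y)))
    (H := fun p q y => Ψ y * (t * (r * w' p q y)) + t * (r * w p y) * (Ψ y * (t * (r * w q y))))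
    dΨ (fun p y => (dΨ y).mul (((dw p y).const_mul r).const_mul t)) ?_ bΨ ?_ ?_ a b hab ?_
  · intro p q
    have h1 := cw p
    have h2 := cw q
    have h3 := cw' p q
    fun_prop
  · exact fun p => bΨ.mul ((bc _).mul ((bc _).mul (bw p)))
  · exact fun p q => (bΨ.mul ((bc _).mul ((bc _).mul (bw' p q)))).add
      (((bc _).mul ((bc _).mul (bw p))).mul (bΨ.mul ((bc _).mul ((bc _).mul (bw q)))))
  · refine fun y => Finset.sum_nonpos fun p _ => Finset.sum_nonpos fun q _ => ?_
    obtain ⟨k, l⟩ := p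
    obtain ⟨k', l'⟩ := q
    rcases eq_or_ne k k' with rfl | hk
    · rw [hrow]; simp
    · refine mul_nonpos_of_nonneg_of_nonpos (sub_nonneg.2 (hcov _ _)) ?_
      have hrr : r * r = 1 := by rw [← abs_mul_abs_self, hr, one_mul]
      have h0 : 0 ≤ Ψ y * (w (k, l) y * w (k', l') y) :=
        mul_nonneg (Real.exp_pos _).le (mul_nonneg
          (mul_nonneg (softmax_nonneg _ _) (softmax_nonneg _ _))
          (mul_nonneg (softmax_nonneg _ _) (softmax_nonneg _ _)))
      have h1 : w' (k, l) (k', l') y = -(β * r * (w (k, l) y * w (k', l') y)) := by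
        simp only [hw', hw, hk, if_false]
        ring
      rw [h1]
      have h2 : Ψ y * (t * (r * -(β * r * (w (k, l) y * w (k', l') y)))) +
          t * (r * w (k, l) y) * (Ψ y * (t * (r * w (k', l') y))) =
          (r * r) * (t * (t - β)) * (Ψ y * (w (k, l) y * w (k', l') y)) := by ring
      rw [h2, hrr, one_mul]
      exact mul_nonpos_of_nonpos_of_nonneg
        (mul_nonpos_of_nonneg_of_nonpos ht.le (by linarith)) h0

end Gordon

/-- A family of linear forms, measured in the sup norm. -/
lemma exists_norm_dotProduct_le {I J : Type*} [Fintype I] [Fintype J] (a : I → J → ℝ) :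
    ∃ D : ℝ, 0 ≤ D ∧ ∀ ω : J → ℝ, ‖fun i => a i ⬝ᵥ ω‖ ≤ D * ‖ω‖ := by
  refine ⟨∑ i, ∑ k, |a i k|, by positivity, fun ω => ?_⟩
  refine (pi_norm_le_iff_of_nonneg (by positivity)).2 fun i => ?_
  calc |a i ⬝ᵥ ω| ≤ ∑ k, |a i k * ω k| := Finset.abs_sum_le_sum_abs _ _
    _ ≤ ∑ k, |a i k| * ‖ω‖ := by
        refine Finset.sum_le_sum fun k _ => ?_
        rw [abs_mul]
        exact mul_le_mul_of_nonneg_left (norm_le_pi_norm ω k) (abs_nonneg _)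
    _ = (∑ k, |a i k|) * ‖ω‖ := by rw [Finset.sum_mul]
    _ ≤ _ := by
        gcongr
        exact Finset.single_le_sum (f := fun i => ∑ k, |a i k|)
          (fun i _ => Finset.sum_nonneg fun k _ => by positivity) (Finset.mem_univ i)

lemma measurable_dotProduct_family {I J : Type*} [Fintype J] (a : I → J → ℝ) :
    Measurable fun (ω : J → ℝ) (i : I) => a i ⬝ᵥ ω :=
  measurable_pi_iff.2 fun _ => (continuous_const.dotProduct continuous_id).measurable

lemma integrable_exp_comp_dotProduct {I J : Type*} [Fintype I] [Fintype J] (a : I → J → ℝ)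
    {f : (I → ℝ) → ℝ} (hf : Measurable f) {A B : ℝ} (hB : 0 ≤ B) (h : ∀ y, |f y| ≤ A + B * ‖y‖) :
    Integrable (fun ω => Real.exp (f fun i => a i ⬝ᵥ ω)) (stdGaussianPi J) := by
  obtain ⟨D, hD, hDa⟩ := exists_norm_dotProduct_le a
  refine ((HasExpGrowth.exp_of_linear_bound A B hB h).comp _ D hD hDa).integrable ?_
  exact (hf.comp (measurable_dotProduct_family a)).exp

/-- Gordon's comparison inequality for the exponential moments of a min-max. -/
theorem minmax_comparison {K U : Type*} [Fintype K] [Fintype U] [Nonempty K] [Nonempty U]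
    {t r : ℝ} (hr : |r| = 1) (ht : 0 < t)
    {J : Type*} [Fintype J] (a b : K × U → J → ℝ) (hab : ∀ i j, a i ⬝ᵥ b j = 0)
    (hrow : ∀ k l l', a (k, l) ⬝ᵥ a (k, l') = b (k, l) ⬝ᵥ b (k, l'))
    (hcov : ∀ i j, b i ⬝ᵥ b j ≤ a i ⬝ᵥ a j) :
    ∫ ω, Real.exp (t * ⨆ k, r * ⨆ l, a (k, l) ⬝ᵥ ω) ∂stdGaussianPi J ≤
      ∫ ω, Real.exp (t * ⨆ k, r * ⨆ l, b (k, l) ⬝ᵥ ω) ∂stdGaussianPi J := by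
  set κ : ℝ := Real.log (Fintype.card K) + Real.log (Fintype.card U) with hκ
  have iM : ∀ (s : ℝ) (c : K × U → J → ℝ),
      Integrable (fun ω => Real.exp (t * (⨆ k, r * ⨆ l, c (k, l) ⬝ᵥ ω) + s)) (stdGaussianPi J) := by
    intro s c
    refine integrable_exp_comp_dotProduct c (f := fun y => t * (⨆ k, r * ⨆ l, y (k, l)) + s)
      (((measurable_minmax r).const_mul t).add_const s) (A := |s|) ht.le fun y => ?_
    refine (abs_add_le _ _).trans ?_
    rw [abs_mul, abs_of_pos ht, add_comm]
    gcongr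
    exact abs_minmax_le hr y
  have iL : ∀ β : ℝ, 0 < β → ∀ (s : ℝ) (c : K × U → J → ℝ),
      Integrable (fun ω => Real.exp (t * (minmaxLse β r fun i => c i ⬝ᵥ ω) + s))
        (stdGaussianPi J) := by
    intro β hβ s c
    refine (iM (s + t * (κ / β)) c).mono' ?_ (Filter.Eventually.of_forall fun ω => ?_)
    · have h1 : Continuous (minmaxLse β r : (K × U → ℝ) → ℝ) :=
        continuous_iff_continuousAt.2 fun y => (hasGrad_minmaxLse hβ r y).hasFDerivAt.continuousAt
      exact (((h1.measurable.comp (measurable_dotProduct_family c)).const_mul t).add_const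
        s).exp.aestronglyMeasurable
    · rw [Real.norm_eq_abs, Real.abs_exp]
      refine Real.exp_le_exp.2 ?_
      have := mul_le_mul_of_nonneg_left
        (abs_le.1 (abs_minmaxLse_sub_le hβ hr fun i => c i ⬝ᵥ ω)).2 ht.le
      rw [mul_sub] at this
      linarith
  have key : ∀ β : ℝ, t ≤ β →
      ∫ ω, Real.exp (t * ⨆ k, r * ⨆ l, a (k, l) ⬝ᵥ ω) ∂stdGaussianPi J ≤
      Real.exp (2 * t * κ / β) *
        ∫ ω, Real.exp (t * ⨆ k, r * ⨆ l, b (k, l) ⬝ᵥ ω) ∂stdGaussianPi J := by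
    intro β hβt
    have hβ : 0 < β := ht.trans_le hβt
    have iM' : ∀ c : K × U → J → ℝ, _ := fun c => iM 0 c
    have iL' : ∀ c : K × U → J → ℝ, _ := fun c => iL β hβ 0 c
    simp only [add_zero] at iM' iL'
    have hb : ∀ (c : K × U → J → ℝ) ω, _ := fun c ω =>
      abs_le.1 (abs_minmaxLse_sub_le hβ hr fun i => c i ⬝ᵥ ω)
    have hsplit : 2 * t * κ / β = t * (κ / β) + t * (κ / β) := by ring
    calc ∫ ω, Real.exp (t * ⨆ k, r * ⨆ l, a (k, l) ⬝ᵥ ω) ∂stdGaussianPi J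
        ≤ ∫ ω, Real.exp (t * (κ / β)) *
            Real.exp (t * minmaxLse β r fun i => a i ⬝ᵥ ω) ∂stdGaussianPi J := by
          refine integral_mono (iM' a) ((iL' a).const_mul _) fun ω => ?_
          dsimp only
          rw [← Real.exp_add, ← mul_add]
          refine Real.exp_le_exp.2 (mul_le_mul_of_nonneg_left ?_ ht.le)
          linarith [(hb a ω).1]
      _ ≤ Real.exp (t * (κ / β)) *
            ∫ ω, Real.exp (t * minmaxLse β r fun i => b i ⬝ᵥ ω) ∂stdGaussianPi J := by
          rw [integral_const_mul]
          exact mul_le_mul_of_nonneg_left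
            (smooth_minmax_comparison hβ hr ht hβt a b hab hrow hcov) (Real.exp_pos _).le
      _ ≤ Real.exp (t * (κ / β)) * ∫ ω, Real.exp (t * (κ / β)) *
            Real.exp (t * ⨆ k, r * ⨆ l, b (k, l) ⬝ᵥ ω) ∂stdGaussianPi J := by
          refine mul_le_mul_of_nonneg_left ?_ (Real.exp_pos _).le
          refine integral_mono (iL' b) ((iM' b).const_mul _) fun ω => ?_
          dsimp only
          rw [← Real.exp_add, ← mul_add]
          refine Real.exp_le_exp.2 (mul_le_mul_of_nonneg_left ?_ ht.le)
          linarith [(hb b ω).2]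
      _ = _ := by rw [integral_const_mul, ← mul_assoc, ← Real.exp_add, hsplit]
  have hlim : Filter.Tendsto (fun β : ℝ => Real.exp (2 * t * κ / β) *
      ∫ ω, Real.exp (t * ⨆ k, r * ⨆ l, b (k, l) ⬝ᵥ ω) ∂stdGaussianPi J) Filter.atTop
      (nhds (Real.exp 0 *
        ∫ ω, Real.exp (t * ⨆ k, r * ⨆ l, b (k, l) ⬝ᵥ ω) ∂stdGaussianPi J)) :=
    ((Real.continuous_exp.tendsto 0).comp
      (Filter.tendsto_id.const_div_atTop (2 * t * κ))).mul_const _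
  rw [Real.exp_zero, one_mul] at hlim
  exact ge_of_tendsto hlim ((Filter.eventually_ge_atTop t).mono key)

lemma ciSup_add_const {I : Type*} [Finite I] [Nonempty I] (y : I → ℝ) (c : ℝ) :
    ⨆ i, (y i + c) = (⨆ i, y i) + c :=
  (ciSup_add (Set.finite_range y).bddAbove c).symm

/-- Gordon's inequality for a Gaussian matrix acting on unit vectors `x k`, tested against unit
vectors `u l`. -/
theorem gordon_exp {M N K U : Type*} [Fintype M] [Fintype N] [Fintype K] [Fintype U] [Nonempty K]
    [Nonempty U] {t r : ℝ} (hr : |r| = 1) (ht : 0 < t) (x : K → N → ℝ) (u : U → M → ℝ)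
    (hx : ∀ k, x k ⬝ᵥ x k = 1) (hu : ∀ l, u l ⬝ᵥ u l = 1) :
    Real.exp (t ^ 2 / 2) * ∫ A : M × N → ℝ, Real.exp (t * ⨆ k, r * ⨆ l,
        (fun p : M × N => u l p.1 * x k p.2) ⬝ᵥ A) ∂stdGaussianPi (M × N) ≤
      (∫ g, Real.exp (t * (r * ⨆ l, u l ⬝ᵥ g)) ∂stdGaussianPi M) *
        ∫ G, Real.exp (t * ⨆ k, r * (x k ⬝ᵥ G)) ∂stdGaussianPi N := by
  have hrr : r * r = 1 := by rw [← abs_mul_abs_self, hr, one_mul]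
  have huv : ∀ k k' l l', (fun p : M × N => u l p.1 * x k p.2) ⬝ᵥ
      (fun p : M × N => u l' p.1 * x k' p.2) = (u l ⬝ᵥ u l') * (x k ⬝ᵥ x k') := by
    intro k k' l l'
    simp only [dotProduct, Fintype.sum_prod_type, Finset.sum_mul_sum]
    exact Finset.sum_congr rfl fun i _ => Finset.sum_congr rfl fun j _ => by ring
  have h := minmax_comparison (K := K) (U := U) hr ht (J := ((M × N) ⊕ Unit) ⊕ (M ⊕ N))
    (fun q => Sum.elim (Sum.elim (fun p : M × N => u q.2 p.1 * x q.1 p.2) 1) 0)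
    (fun q => Sum.elim 0 (Sum.elim (u q.2) (x q.1))) ?_ ?_ ?_
  · have hl : ∀ (ω : ((M × N) ⊕ Unit) ⊕ (M ⊕ N) → ℝ) k l,
        Sum.elim (Sum.elim (fun p : M × N => u l p.1 * x k p.2) 1) 0 ⬝ᵥ ω =
          (fun p : M × N => u l p.1 * x k p.2) ⬝ᵥ (fun p => ω (Sum.inl (Sum.inl p))) +
            ω (Sum.inl (Sum.inr ())) := by
      intro ω k l
      simp [dotProduct]
    have hr' : ∀ (ω : ((M × N) ⊕ Unit) ⊕ (M ⊕ N) → ℝ) k l,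
        Sum.elim (0 : (M × N) ⊕ Unit → ℝ) (Sum.elim (u l) (x k)) ⬝ᵥ ω =
          u l ⬝ᵥ (fun i => ω (Sum.inr (Sum.inl i))) +
            x k ⬝ᵥ (fun j => ω (Sum.inr (Sum.inr j))) := by
      intro ω k l
      simp [dotProduct]
    simp only [hl, hr', ciSup_add_const, mul_add] at h
    have hswap : ∀ ω : ((M × N) ⊕ Unit) ⊕ (M ⊕ N) → ℝ,
        ⨆ k, ((r * ⨆ l, u l ⬝ᵥ fun i => ω (Sum.inr (Sum.inl i))) +
          r * (x k ⬝ᵥ fun j => ω (Sum.inr (Sum.inr j)))) =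
        (⨆ k, r * (x k ⬝ᵥ fun j => ω (Sum.inr (Sum.inr j)))) +
          r * ⨆ l, u l ⬝ᵥ fun i => ω (Sum.inr (Sum.inl i)) := by
      intro ω
      rw [← ciSup_add_const]
      simp only [add_comm]
    simp only [hswap, mul_add, Real.exp_add] at h
    have e1 := integral_mul_stdGaussianPi_sum (ι := (M × N) ⊕ Unit) (κ := M ⊕ N)
      (fun ω => Real.exp (t * ⨆ k, r * ⨆ l, (fun p : M × N => u l p.1 * x k p.2) ⬝ᵥ
        (fun p => ω (Sum.inl p))) * Real.exp (t * (r * ω (Sum.inr ())))) (fun _ => 1)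
    have e2 := integral_mul_stdGaussianPi_sum (ι := M × N) (κ := Unit)
      (fun A => Real.exp (t * ⨆ k, r * ⨆ l, (fun p : M × N => u l p.1 * x k p.2) ⬝ᵥ A))
      (fun ω => Real.exp (t * (r * ω ())))
    have e3 := integral_mul_stdGaussianPi_sum (ι := (M × N) ⊕ Unit) (κ := M ⊕ N) (fun _ => 1)
      (fun ω => Real.exp (t * ⨆ k, r * (x k ⬝ᵥ fun j => ω (Sum.inr j))) *
        Real.exp (t * (r * ⨆ l, u l ⬝ᵥ fun i => ω (Sum.inl i))))
    have e4 := integral_mul_stdGaussianPi_sum (ι := M) (κ := N)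
      (fun g => Real.exp (t * (r * ⨆ l, u l ⬝ᵥ g)))
      (fun G => Real.exp (t * ⨆ k, r * (x k ⬝ᵥ G)))
    have e5 := integral_exp_mul_stdGaussianPi_unit (t * r)
    simp only [mul_assoc] at e5
    simp only [mul_one, one_mul, integral_const, probReal_univ, smul_eq_mul] at e1 e3
    rw [e1, e2, e3, e5] at h
    rw [← e4]
    have e6 : (t * r) ^ 2 / 2 = t ^ 2 / 2 := by
      rw [mul_pow, pow_two r, hrr, mul_one]
    rw [e6] at h
    rw [mul_comm]
    refine h.trans_eq ?_
    congr 1 with ω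
    ring
  · intro i j
    simp
  · intro k l l'
    simp [huv, hx]
  · rintro ⟨k, l⟩ ⟨k', l'⟩
    simp only [sumElim_dotProduct_sumElim, huv, dotProduct_zero]
    simp only [dotProduct_one, Pi.one_apply, Finset.univ_unique, Finset.sum_singleton]
    have h1 := dotProduct_le_one (hx k) (hx k')
    have h2 := dotProduct_le_one (hu l) (hu l')
    nlinarith

/-- Independence of the rows of a standard Gaussian matrix. -/
lemma integral_prod_rows_stdGaussianPi {K M : Type*} [Fintype K] [Fintype M]
    (f : (M → ℝ) → ℝ) :
    ∫ ω : K × M → ℝ, ∏ k, f (fun i => ω (k, i)) ∂stdGaussianPi (K × M) =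
      (∫ g, f g ∂stdGaussianPi M) ^ Fintype.card K := by
  have h := Measure.infinitePi_map_curry (ι := K) (κ := M) (X := ℝ) fun _ _ => gaussianReal 0 1
  simp only [Measure.infinitePi_eq_pi] at h
  rw [← integral_fintype_prod_eq_pow (ι := K) f, ← h, integral_map_equiv]
  rfl

lemma lse_add_const {I : Type*} [Fintype I] [Nonempty I] {β : ℝ} (hβ : 0 < β) (y : I → ℝ) (c : ℝ) :
    lse β (fun i => y i + c) = lse β y + c := by
  have h : ∑ i, Real.exp (β * (y i + c)) = (∑ i, Real.exp (β * y i)) * Real.exp (β * c) := by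
    simp only [mul_add, Real.exp_add, Finset.sum_mul]
  rw [lse, lse, h, Real.log_mul (sum_exp_pos β y).ne' (Real.exp_pos _).ne', Real.log_exp]
  field_simp

/-- The exponential moment of a smooth maximum is controlled by independent copies of it. -/
lemma smooth_replica_comparison {M U K : Type*} [Fintype M] [Fintype U] [Nonempty U] [Fintype K]
    {β : ℝ} (hβ : 0 < β) (c : ℝ) (u : U → M → ℝ) (hu : ∀ l, u l ⬝ᵥ u l = 1) :
    ∫ g, Real.exp (Fintype.card K * c * lse β fun l => u l ⬝ᵥ g) ∂stdGaussianPi M ≤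
      Real.exp ((Fintype.card K * c) ^ 2 / 2) *
        (∫ g, Real.exp (c * lse β fun l => u l ⬝ᵥ g) ∂stdGaussianPi M) ^ Fintype.card K := by
  classical
  set Ψ : (K × U → ℝ) → ℝ := fun y => Real.exp (∑ k, c * lse β fun l => y (k, l)) with hΨ
  set w : K × U → (K × U → ℝ) → ℝ := fun q y => softmax β q.2 fun l => y (q.1, l) with hw
  set w' : K × U → K × U → (K × U → ℝ) → ℝ := fun p q y =>
    if p.1 = q.1 then β * (softmax β p.2 fun l => y (p.1, l)) *
        ((if p.2 = q.2 then 1 else 0) - softmax β q.2 fun l => y (p.1, l)) else 0 with hw'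
  have dΨ : ∀ y, HasGrad Ψ (fun q => Ψ y * (c * w q y)) y := fun y => by
    refine (HasGrad.sum fun k => hasGrad_row hβ c k y).exp.congr_grad fun q => ?_
    simp [hw, hΨ]
  have dw : ∀ p y, HasGrad (w p) (fun q => w' p q y) y := fun p y =>
    HasGrad.comp_row p.1 (hasGrad_softmax hβ p.2 _)
  have cΨ : Continuous Ψ :=
    continuous_iff_continuousAt.2 fun y => (dΨ y).hasFDerivAt.continuousAt
  have cw : ∀ p, Continuous (w p) := fun p =>
    continuous_iff_continuousAt.2 fun y => (dw p y).hasFDerivAt.continuousAt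
  have cσ : ∀ k l, Continuous fun y : K × U → ℝ => softmax β l fun l => y (k, l) :=
    fun k l => (continuous_softmax hβ l).comp (by fun_prop)
  have cw' : ∀ p q, Continuous (w' p q) := by
    intro p q
    simp only [hw']
    split_ifs
    · exact (continuous_const.mul (cσ _ _)).mul (continuous_const.sub (cσ _ _))
    · exact (continuous_const.mul (cσ _ _)).mul (continuous_const.sub (cσ _ _))
    · exact continuous_const
  have bw : ∀ p, HasExpGrowth (w p) :=
    fun p => .of_bounded 1 fun y => abs_softmax_le_one hβ _ _
  have bc : ∀ s : ℝ, HasExpGrowth fun _ : K × U → ℝ => s := fun s => .of_bounded |s| fun _ => le_rfl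
  have bw' : ∀ p q, HasExpGrowth (w' p q) := by
    intro p q
    refine .of_bounded (β * 1 * (1 + 1)) fun y => ?_
    simp only [hw']
    have h1 := abs_softmax_le_one hβ p.2 fun l => y (p.1, l)
    have h2 := abs_softmax_le_one hβ q.2 fun l => y (p.1, l)
    split_ifs
    · rw [abs_mul, abs_mul, abs_of_pos hβ]
      gcongr
      exact (abs_sub _ _).trans (by rw [abs_one]; linarith)
    · rw [abs_mul, abs_mul, abs_of_pos hβ]
      gcongr
      exact (abs_sub _ _).trans (by rw [abs_zero]; linarith)
    · rw [abs_zero]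
      positivity
  have bΨ : HasExpGrowth Ψ := by
    refine HasExpGrowth.exp_of_linear_bound
      (∑ _k : K, |c| * (Real.log (Fintype.card U) / β)) (∑ _k : K, |c|) (by positivity) fun y => ?_
    rw [Finset.sum_mul, ← Finset.sum_add_distrib]
    refine (Finset.abs_sum_le_sum_abs _ _).trans (Finset.sum_le_sum fun k _ => ?_)
    rw [abs_mul, ← mul_add]
    refine mul_le_mul_of_nonneg_left ((abs_lse_le hβ _).trans ?_) (abs_nonneg c)
    gcongr
    exact (pi_norm_le_iff_of_nonneg (norm_nonneg y)).2 fun l => norm_le_pi_norm y (k, l)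
  have huv : ∀ k k' l l', (fun p : K × M => if p.1 = k then u l p.2 else 0) ⬝ᵥ
      (fun p : K × M => if p.1 = k' then u l' p.2 else 0) =
        if k = k' then u l ⬝ᵥ u l' else 0 := by
    intro k k' l l'
    simp only [dotProduct, Fintype.sum_prod_type, ite_mul, mul_ite, mul_zero, zero_mul]
    rcases eq_or_ne k k' with rfl | h
    · simp
    · simp only [h, if_false]
      refine Finset.sum_eq_zero fun i _ => Finset.sum_eq_zero fun j _ => ?_
      split_ifs with h1 h2
      · exact absurd (h2.symm.trans h1) h
      all_goals rfl
  have h := gaussian_comparison (J := M ⊕ ((K × M) ⊕ Unit)) (Ψ := Ψ)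
    (P := fun p y => Ψ y * (c * w p y))
    (H := fun p q y => Ψ y * (c * w' p q y) + c * w p y * (Ψ y * (c * w q y)))
    dΨ (fun p y => (dΨ y).mul ((dw p y).const_mul c)) ?_ bΨ ?_ ?_
    (fun q => Sum.elim (u q.2) 0)
    (fun q => Sum.elim 0 (Sum.elim (fun p : K × M => if p.1 = q.1 then u q.2 p.2 else 0) 1)) ?_ ?_
  · have hl : ∀ (ω : M ⊕ ((K × M) ⊕ Unit) → ℝ) l,
        Sum.elim (u l) 0 ⬝ᵥ ω = u l ⬝ᵥ fun i => ω (Sum.inl i) := by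
      intro ω l
      simp [dotProduct]
    have hr : ∀ (ω : M ⊕ ((K × M) ⊕ Unit) → ℝ) k l,
        Sum.elim (0 : M → ℝ) (Sum.elim (fun p : K × M => if p.1 = k then u l p.2 else 0) 1) ⬝ᵥ ω =
          u l ⬝ᵥ (fun i => ω (Sum.inr (Sum.inl (k, i)))) + ω (Sum.inr (Sum.inr ())) := by
      intro ω k l
      simp only [dotProduct, Fintype.sum_sum_type, Fintype.sum_prod_type, Sum.elim_inl,
        Sum.elim_inr, ite_mul, zero_mul, Pi.zero_apply, Pi.one_apply, Finset.sum_const_zero]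
      rw [Finset.sum_comm]
      simp
    simp only [hΨ, hl, hr, lse_add_const hβ, Finset.sum_const, Finset.card_univ, nsmul_eq_mul,
      mul_add, Finset.sum_add_distrib, ← mul_assoc] at h
    simp only [Real.exp_add, Real.exp_sum] at h
    have e1 := integral_mul_stdGaussianPi_sum (ι := M) (κ := (K × M) ⊕ Unit)
      (fun g => Real.exp (Fintype.card K * c * lse β fun l => u l ⬝ᵥ g)) (fun _ => 1)
    have e2 := integral_mul_stdGaussianPi_sum (ι := M) (κ := (K × M) ⊕ Unit) (fun _ => 1)
      (fun ω => (∏ k, Real.exp (c * lse β fun l => u l ⬝ᵥ fun i => ω (Sum.inl (k, i)))) *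
        Real.exp (Fintype.card K * c * ω (Sum.inr ())))
    have e3 := integral_mul_stdGaussianPi_sum (ι := K × M) (κ := Unit)
      (fun ω => ∏ k, Real.exp (c * lse β fun l => u l ⬝ᵥ fun i => ω (k, i)))
      (fun ω => Real.exp (Fintype.card K * c * ω ()))
    have e4 := integral_prod_rows_stdGaussianPi (K := K)
      (fun g : M → ℝ => Real.exp (c * lse β fun l => u l ⬝ᵥ g))
    simp only [mul_one, one_mul, integral_const, probReal_univ, smul_eq_mul] at e1 e2
    rw [e1, e2, e3, e4, integral_exp_mul_stdGaussianPi_unit] at h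
    rwa [mul_comm (Real.exp _)]
  · intro p q
    have h1 := cw p
    have h2 := cw q
    have h3 := cw' p q
    fun_prop
  · exact fun p => bΨ.mul ((bc _).mul (bw p))
  · exact fun p q => (bΨ.mul ((bc _).mul (bw' p q))).add
      (((bc _).mul (bw p)).mul (bΨ.mul ((bc _).mul (bw q))))
  · intro i j
    simp
  · intro y
    simp only [sumElim_dotProduct_sumElim, huv, dotProduct_zero, dotProduct_one, Pi.one_apply,
      Finset.univ_unique, Finset.sum_singleton, zero_add, add_zero]
    have hzero : ∀ p, ∑ q, w' p q y = 0 := by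
      rintro ⟨k, l⟩
      simp only [hw', Fintype.sum_prod_type]
      rw [Finset.sum_comm]
      simp [← Finset.mul_sum, sum_softmax hβ]
    have hterm : ∀ p q, (u p.2 ⬝ᵥ u q.2 - ((if p.1 = q.1 then u p.2 ⬝ᵥ u q.2 else 0) + 1)) *
        (Ψ y * (c * w' p q y) + c * w p y * (Ψ y * (c * w q y))) ≤ -(Ψ y * c) * w' p q y := by
      intro p q
      have h0 : 0 ≤ Ψ y * (w p y * w q y) * c ^ 2 :=
        mul_nonneg (mul_nonneg (Real.exp_pos _).le
          (mul_nonneg (softmax_nonneg _ _) (softmax_nonneg _ _))) (sq_nonneg c)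
      by_cases hpq : p.1 = q.1
      · simp only [hpq, if_true]
        linarith
      · have h1 : w' p q y = 0 := by simp [hw', hpq]
        rw [h1]
        simp only [hpq, if_false, mul_zero, zero_add]
        have h2 := dotProduct_le_one (hu p.2) (hu q.2)
        have h3 : (u p.2 ⬝ᵥ u q.2 - 1) * (Ψ y * (w p y * w q y) * c ^ 2) ≤ 0 :=
          mul_nonpos_of_nonpos_of_nonneg (by linarith) h0
        linarith
    calc _ ≤ ∑ p, ∑ q, -(Ψ y * c) * w' p q y :=
          Finset.sum_le_sum fun p _ => Finset.sum_le_sum fun q _ => hterm p q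
      _ = 0 := by simp [← Finset.mul_sum, hzero]

lemma integrable_exp_mul_ciSup {M U : Type*} [Fintype M] [Fintype U] [Nonempty U] (c : ℝ)
    (u : U → M → ℝ) :
    Integrable (fun g => Real.exp (c * ⨆ l, u l ⬝ᵥ g)) (stdGaussianPi M) := by
  refine integrable_exp_comp_dotProduct u (f := fun y => c * ⨆ l, y l)
    ((Measurable.iSup fun l => measurable_pi_apply l).const_mul c) (A := 0) (abs_nonneg c)
    fun y => ?_
  rw [abs_mul, zero_add]
  gcongr
  exact abs_ciSup_le fun l => norm_le_pi_norm y l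

/-- The exponential moment of a Gaussian maximum is controlled by independent copies of it. -/
lemma replica_comparison {M U : Type*} [Fintype M] [Fintype U] [Nonempty U]
    (n : ℕ) (c : ℝ) (u : U → M → ℝ) (hu : ∀ l, u l ⬝ᵥ u l = 1) :
    ∫ g, Real.exp (n * c * ⨆ l, u l ⬝ᵥ g) ∂stdGaussianPi M ≤
      Real.exp ((n * c) ^ 2 / 2) *
        (∫ g, Real.exp (c * ⨆ l, u l ⬝ᵥ g) ∂stdGaussianPi M) ^ n := by
  set κ : ℝ := Real.log (Fintype.card U) with hκ
  have iL : ∀ β : ℝ, 0 < β → ∀ c : ℝ,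
      Integrable (fun g => Real.exp (c * lse β fun l => u l ⬝ᵥ g)) (stdGaussianPi M) := by
    intro β hβ c
    refine integrable_exp_comp_dotProduct u (f := fun y => c * lse β y)
      ((continuous_lse hβ).measurable.const_mul c) (A := |c| * (κ / β)) (abs_nonneg c) fun y => ?_
    rw [abs_mul, ← mul_add]
    gcongr
    exact abs_lse_le hβ y
  have hb : ∀ β : ℝ, 0 < β → ∀ (c : ℝ) (g : M → ℝ),
      |c * (lse β fun l => u l ⬝ᵥ g) - c * ⨆ l, u l ⬝ᵥ g| ≤ |c| * (κ / β) := by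
    intro β hβ c g
    rw [← mul_sub, abs_mul]
    gcongr
    exact abs_lse_sub_ciSup_le hβ _
  have key : ∀ β : ℝ, 0 < β → ∫ g, Real.exp (n * c * ⨆ l, u l ⬝ᵥ g) ∂stdGaussianPi M ≤
      Real.exp (|n * c| * (κ / β)) * (Real.exp ((n * c) ^ 2 / 2) *
        (Real.exp (|c| * (κ / β)) * ∫ g, Real.exp (c * ⨆ l, u l ⬝ᵥ g) ∂stdGaussianPi M) ^ n) := by
    intro β hβ
    have h1 : ∫ g, Real.exp (n * c * ⨆ l, u l ⬝ᵥ g) ∂stdGaussianPi M ≤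
        Real.exp (|n * c| * (κ / β)) *
          ∫ g, Real.exp (n * c * lse β fun l => u l ⬝ᵥ g) ∂stdGaussianPi M := by
      rw [← integral_const_mul]
      refine integral_mono (integrable_exp_mul_ciSup _ u) ((iL β hβ _).const_mul _) fun g => ?_
      dsimp only
      rw [← Real.exp_add]
      exact Real.exp_le_exp.2 (by linarith [(abs_le.1 (hb β hβ (n * c) g)).1])
    have h2 : ∫ g, Real.exp (c * lse β fun l => u l ⬝ᵥ g) ∂stdGaussianPi M ≤
        Real.exp (|c| * (κ / β)) *
          ∫ g, Real.exp (c * ⨆ l, u l ⬝ᵥ g) ∂stdGaussianPi M := by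
      rw [← integral_const_mul]
      refine integral_mono (iL β hβ _) ((integrable_exp_mul_ciSup _ u).const_mul _) fun g => ?_
      dsimp only
      rw [← Real.exp_add]
      exact Real.exp_le_exp.2 (by linarith [(abs_le.1 (hb β hβ c g)).2])
    have h3 := smooth_replica_comparison (K := Fin n) hβ c u hu
    rw [Fintype.card_fin] at h3
    refine h1.trans (mul_le_mul_of_nonneg_left (h3.trans ?_) (Real.exp_pos _).le)
    refine mul_le_mul_of_nonneg_left (pow_le_pow_left₀ ?_ h2 n) (Real.exp_pos _).le
    exact integral_nonneg fun _ => (Real.exp_pos _).le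
  have hlim : Filter.Tendsto (fun β : ℝ => Real.exp (|n * c| * (κ / β)) *
      (Real.exp ((n * c) ^ 2 / 2) *
        (Real.exp (|c| * (κ / β)) * ∫ g, Real.exp (c * ⨆ l, u l ⬝ᵥ g) ∂stdGaussianPi M) ^ n))
      Filter.atTop (nhds (Real.exp (|n * c| * 0) * (Real.exp ((n * c) ^ 2 / 2) *
        (Real.exp (|c| * 0) * ∫ g, Real.exp (c * ⨆ l, u l ⬝ᵥ g) ∂stdGaussianPi M) ^ n))) := by
    have h0 : Filter.Tendsto (fun β : ℝ => κ / β) Filter.atTop (nhds 0) :=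
      Filter.tendsto_id.const_div_atTop κ
    have h1 : Continuous fun s : ℝ => Real.exp (|n * c| * s) * (Real.exp ((n * c) ^ 2 / 2) *
        (Real.exp (|c| * s) * ∫ g, Real.exp (c * ⨆ l, u l ⬝ᵥ g) ∂stdGaussianPi M) ^ n) := by
      fun_prop
    exact (h1.tendsto 0).comp h0
  simp only [mul_zero, Real.exp_zero, one_mul] at hlim
  exact ge_of_tendsto hlim ((Filter.eventually_gt_atTop 0).mono key)

lemma exp_le_one_add_add_sq_mul_exp_abs (x : ℝ) :
    Real.exp x ≤ 1 + x + x ^ 2 * Real.exp |x| := by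
  have h := Complex.norm_exp_sub_sum_le_norm_mul_exp (x : ℂ) 2
  simp only [Finset.sum_range_succ, Finset.sum_range_zero, zero_add, pow_zero, pow_one,
    Nat.factorial_zero, Nat.factorial_one, Nat.cast_one, div_one, Complex.norm_real,
    Real.norm_eq_abs, sq_abs] at h
  rw [← Complex.ofReal_exp, ← Complex.ofReal_one, ← Complex.ofReal_add, ← Complex.ofReal_sub,
    Complex.norm_real] at h
  linarith [(le_abs_self (Real.exp x - (1 + x))).trans h]

lemma integrable_ciSup {M U : Type*} [Fintype M] [Fintype U] [Nonempty U]
    (u : U → M → ℝ) : Integrable (fun g => ⨆ l, u l ⬝ᵥ g) (stdGaussianPi M) := by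
  obtain ⟨D, hD, hDu⟩ := exists_norm_dotProduct_le u
  refine HasExpGrowth.integrable (.of_linear_bound 0 D le_rfl hD fun g => ?_)
    (.iSup fun l => (continuous_const.dotProduct continuous_id).measurable)
  rw [zero_add]
  exact (abs_ciSup_le fun l => norm_le_pi_norm (fun l => u l ⬝ᵥ g) l).trans (hDu g)

/-- Gaussian concentration: a maximum of standard Gaussian variables has sub-Gaussian
fluctuations around its mean. -/
theorem integral_exp_mul_ciSup_le {M U : Type*} [Fintype M] [Fintype U] [Nonempty U]
    (t : ℝ) (u : U → M → ℝ) (hu : ∀ l, u l ⬝ᵥ u l = 1) :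
    ∫ g, Real.exp (t * ⨆ l, u l ⬝ᵥ g) ∂stdGaussianPi M ≤
      Real.exp (t ^ 2 / 2 + t * ∫ g, ⨆ l, u l ⬝ᵥ g ∂stdGaussianPi M) := by
  set F : (M → ℝ) → ℝ := fun g => ⨆ l, u l ⬝ᵥ g with hF
  have iF : Integrable F (stdGaussianPi M) := integrable_ciSup u
  have iF2 : Integrable (fun g => F g ^ 2 * Real.exp |F g|) (stdGaussianPi M) := by
    obtain ⟨D, hD, hDu⟩ := exists_norm_dotProduct_le u
    have hb : ∀ g, |F g| ≤ 0 + D * ‖g‖ := fun g => by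
      rw [zero_add]
      exact (abs_ciSup_le fun l => norm_le_pi_norm (fun l => u l ⬝ᵥ g) l).trans (hDu g)
    have hm : Measurable F := .iSup fun l => (continuous_const.dotProduct continuous_id).measurable
    have g1 : HasExpGrowth F := .of_linear_bound 0 D le_rfl hD hb
    have g2 : HasExpGrowth fun g => Real.exp |F g| :=
      .exp_of_linear_bound 0 D hD fun g => by rw [abs_abs]; exact hb g
    simp only [pow_two]
    exact ((g1.mul g1).mul g2).integrable ((hm.mul hm).mul (hm.abs).exp)
  set E : ℝ := ∫ g, F g ∂stdGaussianPi M with hE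
  set C : ℝ := ∫ g, F g ^ 2 * Real.exp |F g| ∂stdGaussianPi M with hC
  have key : ∀ n : ℕ, 0 < n → |t| ≤ n → ∫ g, Real.exp (t * F g) ∂stdGaussianPi M ≤
      Real.exp (t ^ 2 / 2 + (t * E + t ^ 2 * C / n)) := by
    intro n hn htn
    have hn' : (0 : ℝ) < n := by exact_mod_cast hn
    have h1 := replica_comparison n (t / n) u hu
    rw [mul_div_cancel₀ _ hn'.ne'] at h1
    have h2 : ∫ g, Real.exp (t / n * F g) ∂stdGaussianPi M ≤
        Real.exp (t / n * E + (t / n) ^ 2 * C) := by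
      refine le_trans ?_ (Real.add_one_le_exp _)
      have i1 : Integrable (fun g => 1 + t / n * F g) (stdGaussianPi M) :=
        (integrable_const _).add (iF.const_mul _)
      have h3 : t / n * E + (t / n) ^ 2 * C + 1 =
          ∫ g, ((1 + t / n * F g) + (t / n) ^ 2 * (F g ^ 2 * Real.exp |F g|)) ∂stdGaussianPi M := by
        rw [integral_add i1 (iF2.const_mul _),
          integral_add (integrable_const _) (iF.const_mul _), integral_const_mul,
          integral_const_mul]
        simp
        ring
      rw [h3]
      refine integral_mono (integrable_exp_mul_ciSup _ u)
        (i1.add (iF2.const_mul _)) fun g => ?_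
      refine (exp_le_one_add_add_sq_mul_exp_abs _).trans ?_
      rw [mul_pow, mul_assoc]
      have h4 : |t / n * F g| ≤ |F g| := by
        rw [abs_mul, abs_div, abs_of_pos hn']
        exact mul_le_of_le_one_left (abs_nonneg _) ((div_le_one hn').2 htn)
      have h5 := Real.exp_le_exp.2 h4
      have h6 : (t / n) ^ 2 * (F g ^ 2 * Real.exp |t / n * F g|) ≤
          (t / n) ^ 2 * (F g ^ 2 * Real.exp |F g|) := by gcongr
      linarith
    refine h1.trans ?_
    rw [Real.exp_add]
    refine mul_le_mul_of_nonneg_left ?_ (Real.exp_pos _).le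
    refine (pow_le_pow_left₀ (integral_nonneg fun _ => (Real.exp_pos _).le) h2 n).trans_eq ?_
    rw [← Real.exp_nat_mul]
    congr 1
    field_simp
  have hlim : Filter.Tendsto (fun n : ℕ => Real.exp (t ^ 2 / 2 + (t * E + t ^ 2 * C / n)))
      Filter.atTop (nhds (Real.exp (t ^ 2 / 2 + (t * E + 0)))) :=
    (Real.continuous_exp.tendsto _).comp
      ((tendsto_const_div_atTop_nhds_zero_nat _).const_add _ |>.const_add _)
  rw [add_zero] at hlim
  refine ge_of_tendsto hlim ?_
  filter_upwards [Filter.eventually_gt_atTop 0, Filter.eventually_ge_atTop ⌈|t|⌉₊] with n h1 h2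
  exact key n h1 ((Nat.le_ceil _).trans (by exact_mod_cast h2))

section Moments

variable {M : Type*} [Fintype M]

lemma dotProduct_self_nonneg_real (v : M → ℝ) : 0 ≤ v ⬝ᵥ v :=
  Finset.sum_nonneg fun _ _ => mul_self_nonneg _

lemma dotProduct_self_pos_real {v : M → ℝ} (hv : v ≠ 0) : 0 < v ⬝ᵥ v :=
  (dotProduct_self_nonneg_real v).lt_of_ne' (by simpa using hv)

lemma dotProduct_le_sqrt_mul_sqrt (u v : M → ℝ) :
    u ⬝ᵥ v ≤ Real.sqrt (u ⬝ᵥ u) * Real.sqrt (v ⬝ᵥ v) := by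
  simpa [dotProduct, pow_two] using Real.sum_mul_le_sqrt_mul_sqrt Finset.univ u v

lemma hasExpGrowth_dotProduct_self : HasExpGrowth fun x : M → ℝ => x ⬝ᵥ x :=
  HasExpGrowth.sum _ fun k _ => (HasExpGrowth.apply k).mul (HasExpGrowth.apply k)

lemma measurable_dotProduct_self : Measurable fun x : M → ℝ => x ⬝ᵥ x :=
  (continuous_id.dotProduct continuous_id).measurable

lemma integrable_dotProduct_self : Integrable (fun x => x ⬝ᵥ x) (stdGaussianPi M) :=
  hasExpGrowth_dotProduct_self.integrable measurable_dotProduct_self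

lemma integral_sq_stdGaussianPi (k : M) : ∫ x, x k * x k ∂stdGaussianPi M = 1 := by
  classical
  rw [integral_apply_mul_stdGaussianPi k (f := fun x => x k) (f' := fun _ => 1)]
  · simp
  · intro x
    simpa using hasDerivAt_id' (x k)
  · exact .apply k
  · exact .of_bounded 1 (by simp)
  · exact measurable_pi_apply k
  · exact measurable_const

lemma integrable_sq_stdGaussianPi (k : M) :
    Integrable (fun x => x k * x k) (stdGaussianPi M) :=
  ((HasExpGrowth.apply k).mul (.apply k)).integrable
    ((measurable_pi_apply k).mul (measurable_pi_apply k))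

lemma integral_dotProduct_self : ∫ x, x ⬝ᵥ x ∂stdGaussianPi M = Fintype.card M := by
  simp only [dotProduct]
  rw [integral_finsetSum _ fun k _ => integrable_sq_stdGaussianPi k]
  simp [integral_sq_stdGaussianPi]

lemma integral_dotProduct_self_sq :
    ∫ x, (x ⬝ᵥ x) ^ 2 ∂stdGaussianPi M = (Fintype.card M : ℝ) ^ 2 + 2 * Fintype.card M := by
  classical
  have g1 := hasExpGrowth_dotProduct_self (M := M)
  have m1 := measurable_dotProduct_self (M := M)
  have hk : ∀ k : M, ∫ x, x k * (x k * (x ⬝ᵥ x)) ∂stdGaussianPi M = Fintype.card M + 2 := by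
    intro k
    rw [integral_apply_mul_stdGaussianPi k (f := fun x => x k * (x ⬝ᵥ x))
      (f' := fun x => x ⬝ᵥ x + 2 * (x k * x k))]
    · rw [integral_add integrable_dotProduct_self ((integrable_sq_stdGaussianPi k).const_mul 2),
        integral_const_mul, integral_dotProduct_self, integral_sq_stdGaussianPi, mul_one]
    · intro x
      have h1 := hasDerivAt_pi.1 (hasDerivAt_update x k (x k))
      have h2 := (h1 k).mul (HasDerivAt.fun_sum (u := Finset.univ) fun i _ => (h1 i).mul (h1 i))
      simp only [Function.update_eq_self] at h2
      refine h2.congr_deriv ?_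
      simp only [dotProduct, Pi.single_apply, mul_ite, ite_mul, mul_one, one_mul, mul_zero,
        zero_mul, if_true, Finset.sum_add_distrib, Finset.sum_ite_eq', Finset.mem_univ]
      simp
      ring
    · exact (HasExpGrowth.apply k).mul g1
    · exact g1.add ((HasExpGrowth.of_bounded 2 (f := fun _ => 2) (by simp)).mul
        ((HasExpGrowth.apply k).mul (.apply k)))
    · exact (measurable_pi_apply k).mul m1
    · exact m1.add (((measurable_pi_apply k).mul (measurable_pi_apply k)).const_mul 2)
  have h : ∀ x : M → ℝ, (x ⬝ᵥ x) ^ 2 = ∑ k, x k * (x k * (x ⬝ᵥ x)) := by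
    intro x
    rw [pow_two]
    nth_rewrite 1 [dotProduct]
    rw [Finset.sum_mul]
    exact Finset.sum_congr rfl fun k _ => mul_assoc _ _ _
  simp only [h]
  rw [integral_finsetSum]
  · simp only [hk, Finset.sum_const, Finset.card_univ, nsmul_eq_mul]
    ring
  · intro k _
    exact ((HasExpGrowth.apply k).mul ((HasExpGrowth.apply k).mul g1)).integrable
      ((measurable_pi_apply k).mul ((measurable_pi_apply k).mul m1))

lemma integrable_sqrt_dotProduct_self :
    Integrable (fun x => Real.sqrt (x ⬝ᵥ x)) (stdGaussianPi M) := by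
  refine ((integrable_const (1 : ℝ)).add integrable_dotProduct_self).mono'
    measurable_dotProduct_self.sqrt.aestronglyMeasurable (Filter.Eventually.of_forall fun x => ?_)
  have h := dotProduct_self_nonneg_real x
  rw [Real.norm_eq_abs, abs_of_nonneg (Real.sqrt_nonneg _)]
  refine Real.sqrt_le_iff.2 ⟨?_, ?_⟩ <;> simp only [Pi.add_apply]
  · linarith
  · nlinarith

lemma integral_sqrt_dotProduct_self_le [Nonempty M] :
    ∫ x, Real.sqrt (x ⬝ᵥ x) ∂stdGaussianPi M ≤ Real.sqrt (Fintype.card M) := by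
  set s := Real.sqrt (Fintype.card M) with hs
  have hc : (0 : ℝ) < Fintype.card M := by exact_mod_cast Fintype.card_pos
  have hs0 : 0 < s := Real.sqrt_pos.2 hc
  have hss : s * s = Fintype.card M := Real.mul_self_sqrt hc.le
  calc ∫ x, Real.sqrt (x ⬝ᵥ x) ∂stdGaussianPi M
      ≤ ∫ x, (2 * s)⁻¹ * (x ⬝ᵥ x + s * s) ∂stdGaussianPi M := by
        refine integral_mono integrable_sqrt_dotProduct_self
          ((integrable_dotProduct_self.add (integrable_const _)).const_mul _) fun x => ?_
        dsimp only
        rw [← div_eq_inv_mul, le_div_iff₀ (by positivity)]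
        nlinarith [sq_nonneg (Real.sqrt (x ⬝ᵥ x) - s),
          Real.mul_self_sqrt (dotProduct_self_nonneg_real x)]
    _ = s := by
        rw [integral_const_mul, integral_add integrable_dotProduct_self (integrable_const _),
          integral_dotProduct_self, ← hss]
        simp
        field_simp
        ring

lemma le_integral_sqrt_dotProduct_self [Nonempty M] :
    Real.sqrt (Fintype.card M) - 1 / Real.sqrt (Fintype.card M) ≤
      ∫ x, Real.sqrt (x ⬝ᵥ x) ∂stdGaussianPi M := by
  set s := Real.sqrt (Fintype.card M) with hs
  have hc : (0 : ℝ) < Fintype.card M := by exact_mod_cast Fintype.card_pos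
  have hs0 : 0 < s := Real.sqrt_pos.2 hc
  have hss : s * s = Fintype.card M := Real.mul_self_sqrt hc.le
  have i2 : Integrable (fun x => (x ⬝ᵥ x) ^ 2) (stdGaussianPi M) := by
    simp only [pow_two]
    exact (hasExpGrowth_dotProduct_self.mul hasExpGrowth_dotProduct_self).integrable
      (measurable_dotProduct_self.mul measurable_dotProduct_self)
  have i1 : Integrable (fun x => 3 * s ^ 2 * (x ⬝ᵥ x)) (stdGaussianPi M) :=
    integrable_dotProduct_self.const_mul _
  calc s - 1 / s = ∫ x, (2 * s ^ 3)⁻¹ * (3 * s ^ 2 * (x ⬝ᵥ x) - (x ⬝ᵥ x) ^ 2)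
          ∂stdGaussianPi M := by
        rw [integral_const_mul, integral_sub i1 i2, integral_const_mul,
          integral_dotProduct_self, integral_dotProduct_self_sq, ← hss]
        field_simp
        ring
    _ ≤ _ := by
        refine integral_mono ((i1.sub i2).const_mul _) integrable_sqrt_dotProduct_self fun x => ?_
        dsimp only
        rw [← div_eq_inv_mul, div_le_iff₀ (by positivity)]
        have h0 := Real.sqrt_nonneg (x ⬝ᵥ x)
        rw [← Real.sq_sqrt (dotProduct_self_nonneg_real x)]
        set r := Real.sqrt (x ⬝ᵥ x)
        rw [Real.sqrt_sq h0]
        have h1 : 0 ≤ r * ((r - s) ^ 2 * (r + 2 * s)) := by positivity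
        nlinarith

lemma ciSup_dotProduct_le {U : Type*} [Nonempty U] {u : U → M → ℝ} (hu : ∀ l, u l ⬝ᵥ u l = 1)
    (g : M → ℝ) : ⨆ l, u l ⬝ᵥ g ≤ Real.sqrt (g ⬝ᵥ g) :=
  ciSup_le fun l => by simpa [hu l] using dotProduct_le_sqrt_mul_sqrt (u l) g

lemma integral_ciSup_dotProduct_le [Nonempty M] {U : Type*} [Fintype U] [Nonempty U]
    {u : U → M → ℝ} (hu : ∀ l, u l ⬝ᵥ u l = 1) :
    ∫ g, ⨆ l, u l ⬝ᵥ g ∂stdGaussianPi M ≤ Real.sqrt (Fintype.card M) :=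
  (integral_mono (integrable_ciSup u) integrable_sqrt_dotProduct_self
    (ciSup_dotProduct_le hu)).trans integral_sqrt_dotProduct_self_le

/-- The vector of Euclidean length one in the direction of `v`. -/
lemma dotProduct_self_normalize {v : M → ℝ} (hv : v ≠ 0) :
    ((Real.sqrt (v ⬝ᵥ v))⁻¹ • v) ⬝ᵥ ((Real.sqrt (v ⬝ᵥ v))⁻¹ • v) = 1 := by
  have h := dotProduct_self_pos_real hv
  have h1 := Real.sqrt_pos.2 h
  rw [smul_dotProduct, dotProduct_smul, smul_eq_mul, smul_eq_mul]
  field_simp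
  exact (Real.sq_sqrt h.le).symm

/-- Finite families of unit vectors that almost compute the Euclidean norm. -/
lemma exists_finset_norming [Nonempty M] {δ : ℝ} (hδ : 0 < δ) :
    ∃ t : Finset (M → ℝ), t.Nonempty ∧ (∀ u ∈ t, u ⬝ᵥ u = 1) ∧
      ∀ v : M → ℝ, (1 - δ) * Real.sqrt (v ⬝ᵥ v) ≤ ⨆ u : t, (u : M → ℝ) ⬝ᵥ v := by
  classical
  set S : Set (M → ℝ) := {u | u ⬝ᵥ u = 1} with hS
  have hcomp : IsCompact S := by
    refine Metric.isCompact_of_isClosed_isBounded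
      (isClosed_eq (continuous_id.dotProduct continuous_id) continuous_const)
      ((Metric.isBounded_iff_subset_closedBall 0).2 ⟨1, fun u hu => ?_⟩)
    rw [mem_closedBall_zero_iff]
    refine (pi_norm_le_iff_of_nonneg zero_le_one).2 fun i => ?_
    rw [Real.norm_eq_abs, ← sq_le_one_iff_abs_le_one, pow_two]
    refine le_trans ?_ (le_of_eq hu)
    exact Finset.single_le_sum (f := fun i => u i * u i) (fun j _ => mul_self_nonneg _)
      (Finset.mem_univ i)
  obtain ⟨t, htS, ht⟩ := hcomp.elim_nhds_subcover (fun u => {x | 1 - δ < u ⬝ᵥ x}) (by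
    intro u hu
    refine (isOpen_lt continuous_const (continuous_const.dotProduct continuous_id)).mem_nhds ?_
    have : u ⬝ᵥ u = 1 := hu
    simp only [Set.mem_ofPred_eq, id, this]
    linarith)
  have hmem : ∀ x : M → ℝ, x ⬝ᵥ x = 1 → ∃ u ∈ t, 1 - δ < u ⬝ᵥ x := by
    intro x hx
    simpa using ht hx
  have hne : t.Nonempty := by
    obtain ⟨i⟩ := ‹Nonempty M›
    obtain ⟨u, hu, -⟩ := hmem (Pi.single i 1) (by simp)
    exact ⟨u, hu⟩
  refine ⟨t, hne, htS, fun v => ?_⟩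
  rcases eq_or_ne v 0 with rfl | hv
  · simp
  · obtain ⟨u, hu, huv⟩ := hmem _ (dotProduct_self_normalize hv)
    have h1 := Real.sqrt_pos.2 (dotProduct_self_pos_real hv)
    rw [dotProduct_smul, smul_eq_mul, ← div_eq_inv_mul, lt_div_iff₀ h1] at huv
    exact huv.le.trans
      (le_ciSup (f := fun u : t => (u : M → ℝ) ⬝ᵥ v) (Set.finite_range _).bddAbove ⟨u, hu⟩)

end Moments

/-- Chevet's inequality for the mean of a Gaussian bilinear form over unit vectors. -/
theorem integral_bilinear_ciSup_le {M N K U : Type*} [Fintype M] [Fintype N] [Fintype K]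
    [Fintype U] [Nonempty M] [Nonempty N] [Nonempty K] [Nonempty U]
    (hMN : Fintype.card M ≤ Fintype.card N) (x : K → N → ℝ) (u : U → M → ℝ)
    (hx : ∀ k, x k ⬝ᵥ x k = 1) (hu : ∀ l, u l ⬝ᵥ u l = 1) :
    Integrable (fun A : M × N → ℝ => ⨆ k, ⨆ l, (fun p : M × N => u l p.1 * x k p.2) ⬝ᵥ A)
        (stdGaussianPi (M × N)) ∧
      ∫ A : M × N → ℝ, ⨆ k, ⨆ l, (fun p : M × N => u l p.1 * x k p.2) ⬝ᵥ A
        ∂stdGaussianPi (M × N) ≤ 5 / 2 * Real.sqrt (Fintype.card N) := by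
  set t := Real.sqrt (Fintype.card N) with ht
  have ht0 : 0 < t := Real.sqrt_pos.2 (by exact_mod_cast Fintype.card_pos)
  set S : (M × N → ℝ) → ℝ := fun A => ⨆ k, ⨆ l, (fun p : M × N => u l p.1 * x k p.2) ⬝ᵥ A with hS
  have hm : Measurable S := .iSup fun k => .iSup fun l =>
    (continuous_const.dotProduct continuous_id).measurable
  obtain ⟨D, hD, hDa⟩ := exists_norm_dotProduct_le
    fun (q : K × U) (p : M × N) => u q.2 p.1 * x q.1 p.2
  have hb : ∀ A, |S A| ≤ 0 + D * ‖A‖ := fun A => by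
    rw [zero_add]
    exact (abs_ciSup_le fun k => abs_ciSup_le fun l => norm_le_pi_norm
      (fun q : K × U => (fun p : M × N => u q.2 p.1 * x q.1 p.2) ⬝ᵥ A) (k, l)).trans (hDa A)
  have iS : Integrable S (stdGaussianPi (M × N)) :=
    (HasExpGrowth.of_linear_bound 0 D le_rfl hD hb).integrable hm
  have iE : Integrable (fun A => Real.exp (t * S A)) (stdGaussianPi (M × N)) := by
    refine (HasExpGrowth.exp_of_linear_bound 0 (t * D) (by positivity) fun A => ?_).integrable
      (hm.const_mul t).exp
    rw [abs_mul, abs_of_pos ht0, zero_add, mul_assoc]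
    have := hb A
    rw [zero_add] at this
    gcongr
  refine ⟨iS, ?_⟩
  have h1 := gordon_exp (r := 1) (by simp) ht0 x u hx hu
  simp only [one_mul] at h1
  have h2 := integral_exp_mul_ciSup_le t u hu
  have h3 := integral_exp_mul_ciSup_le t x hx
  have h4 := integral_ciSup_dotProduct_le hu
  have h5 := integral_ciSup_dotProduct_le hx
  have h6 : Real.sqrt (Fintype.card M) ≤ t := Real.sqrt_le_sqrt (by exact_mod_cast hMN)
  have h7 : Real.exp (t * ∫ A, S A ∂stdGaussianPi (M × N)) ≤
      ∫ A, Real.exp (t * S A) ∂stdGaussianPi (M × N) := by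
    set E := ∫ A, S A ∂stdGaussianPi (M × N) with hE
    have h8 : ∫ A, Real.exp (t * E) * (1 + (t * S A - t * E)) ∂stdGaussianPi (M × N) ≤
        ∫ A, Real.exp (t * S A) ∂stdGaussianPi (M × N) := by
      refine integral_mono (((integrable_const _).add
        ((iS.const_mul t).sub (integrable_const _))).const_mul _) iE fun A => ?_
      dsimp only
      have h9 := Real.add_one_le_exp (t * S A - t * E)
      calc Real.exp (t * E) * (1 + (t * S A - t * E))
          ≤ Real.exp (t * E) * Real.exp (t * S A - t * E) := by
            rw [add_comm 1]
            gcongr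
        _ = Real.exp (t * S A) := by rw [← Real.exp_add]; ring_nf
    refine le_trans (le_of_eq ?_) h8
    have i1 : Integrable (fun A => t * S A - t * E) (stdGaussianPi (M × N)) :=
      (iS.const_mul t).sub (integrable_const _)
    rw [integral_const_mul, integral_add (integrable_const _) i1,
      integral_sub (iS.const_mul t) (integrable_const _), integral_const_mul]
    simp [← hE]
  have h8 : Real.exp (t ^ 2 / 2 + t * ∫ A, S A ∂stdGaussianPi (M × N)) ≤
      Real.exp ((t ^ 2 / 2 + t * t) + (t ^ 2 / 2 + t * t)) := by
    rw [Real.exp_add, Real.exp_add (t ^ 2 / 2 + t * t)]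
    refine (mul_le_mul_of_nonneg_left h7 (Real.exp_pos _).le).trans (h1.trans ?_)
    refine mul_le_mul (h2.trans ?_) (h3.trans ?_)
      (integral_nonneg fun _ => (Real.exp_pos _).le) (Real.exp_pos _).le
    · exact Real.exp_le_exp.2 (by gcongr; exact h4.trans h6)
    · exact Real.exp_le_exp.2 (by gcongr)
  have h9 := Real.exp_le_exp.1 h8
  have h10 : t * ∫ A, S A ∂stdGaussianPi (M × N) ≤ t * (5 / 2 * t) := by linarith
  exact le_of_mul_le_mul_left h10 ht0

/-- A singular value decomposition in terms of `singVals`. -/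
lemma exists_singVals_decomposition {n₁ n₂ : ℕ} (hn₂ : 0 < n₂) (X : Matrix (Fin n₁) (Fin n₂) ℝ) :
    ∃ (w : Fin n₁ → Fin n₁ → ℝ) (v : Fin n₁ → Fin n₂ → ℝ), (∀ i, w i ⬝ᵥ w i = 1) ∧
      (∀ i, v i ⬝ᵥ v i = 1) ∧ ∀ a b, X a b = ∑ i, singVals X i * (w i a * v i b) := by
  classical
  set hH := Matrix.isHermitian_mul_conjTranspose_self X with hHdef
  set w : Fin n₁ → Fin n₁ → ℝ := fun i => (hH.eigenvectorBasis i).ofLp with hw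
  have hortho : ∀ i, w i ⬝ᵥ w i = 1 := by
    intro i
    have h := hH.eigenvectorBasis.orthonormal.1 i
    rw [EuclideanSpace.norm_eq, Real.sqrt_eq_one] at h
    simpa [hw, dotProduct, pow_two] using h
  have hcomplete : ∀ a b, ∑ i, w i a * w i b = if a = b then 1 else 0 := by
    intro a b
    have h := hH.eigenvectorBasis.sum_inner_mul_inner (EuclideanSpace.single a 1)
      (EuclideanSpace.single b 1)
    simpa [hw, EuclideanSpace.inner_single_left, EuclideanSpace.inner_single_right,
      Pi.single_apply, eq_comm] using h
  set z : Fin n₁ → Fin n₂ → ℝ := fun i => X.transpose.mulVec (w i) with hz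
  have hzz : ∀ i, z i ⬝ᵥ z i = hH.eigenvalues i := by
    intro i
    have h := hH.mulVec_eigenvectorBasis i
    calc z i ⬝ᵥ z i = w i ⬝ᵥ (X * X.conjTranspose).mulVec (w i) := by
          rw [← Matrix.mulVec_mulVec, Matrix.conjTranspose_eq_transpose_of_trivial,
            Matrix.dotProduct_mulVec (w i) X, ← Matrix.mulVec_transpose]
      _ = hH.eigenvalues i := by
          rw [h, dotProduct_smul, hortho, smul_eq_mul, mul_one]
  have hv : ∀ i, ∃ v : Fin n₂ → ℝ, v ⬝ᵥ v = 1 ∧ ∀ b, z i b = singVals X i * v b := by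
    intro i
    have hs : singVals X i = Real.sqrt (z i ⬝ᵥ z i) := by rw [hzz]; rfl
    rcases eq_or_ne (z i) 0 with h0 | h0
    · refine ⟨Pi.single ⟨0, hn₂⟩ 1, by simp, fun b => ?_⟩
      simp [hs, h0]
    · refine ⟨_, dotProduct_self_normalize h0, fun b => ?_⟩
      have := Real.sqrt_pos.2 (dotProduct_self_pos_real h0)
      rw [hs, Pi.smul_apply, smul_eq_mul, mul_inv_cancel_left₀ this.ne']
  choose v hv1 hv2 using hv
  refine ⟨w, v, hortho, hv1, fun a b => ?_⟩
  calc X a b = ∑ c, (∑ i, w i a * w i c) * X c b := by simp [hcomplete]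
    _ = ∑ i, w i a * z i b := by
        simp only [hz, Matrix.mulVec, dotProduct, Matrix.transpose_apply, Finset.sum_mul,
          Finset.mul_sum]
        rw [Finset.sum_comm]
        exact Finset.sum_congr rfl fun i _ => Finset.sum_congr rfl fun c _ => by ring
    _ = _ := Finset.sum_congr rfl fun i _ => by rw [hv2]; ring

/-- Normalized matrices of `ℓ*`-rank at most `τ`, as vectors. -/
def lstarSphere (n₁ n₂ : ℕ) (τ : ℝ) : Set (Fin n₁ × Fin n₂ → ℝ) :=
  {x | ∃ X : Matrix (Fin n₁) (Fin n₂) ℝ, X ≠ 0 ∧ lstarRank X ≤ τ ∧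
    x = fun p => X p.1 p.2 / frobNorm X}

lemma frobNorm_pos {n₁ n₂ : ℕ} {X : Matrix (Fin n₁) (Fin n₂) ℝ} (hX : X ≠ 0) : 0 < frobNorm X := by
  refine Real.sqrt_pos.2 (lt_of_le_of_ne (by positivity) fun h => hX ?_)
  ext i j
  have h1 := (Finset.sum_eq_zero_iff_of_nonneg fun i _ => by positivity).1 h.symm i
    (Finset.mem_univ i)
  have h2 := (Finset.sum_eq_zero_iff_of_nonneg fun j _ => by positivity).1 h1 j (Finset.mem_univ j)
  simpa using h2

lemma dotProduct_self_of_mem_lstarSphere {n₁ n₂ : ℕ} {τ : ℝ} {x : Fin n₁ × Fin n₂ → ℝ}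
    (hx : x ∈ lstarSphere n₁ n₂ τ) : x ⬝ᵥ x = 1 := by
  obtain ⟨X, hX, -, rfl⟩ := hx
  have h := frobNorm_pos hX
  have h2 : ∑ i, ∑ j, X i j * X i j = frobNorm X * frobNorm X := by
    rw [frobNorm, Real.mul_self_sqrt (by positivity)]
    simp only [pow_two]
  simp only [dotProduct, Fintype.sum_prod_type, div_mul_div_comm, ← Finset.sum_div]
  rw [h2, div_self (by positivity)]

/-- The mean width of the set of normalized matrices of `ℓ*`-rank at most `τ`. -/
theorem integral_ciSup_lstarSphere_le {n₁ n₂ : ℕ} (hn₁ : 0 < n₁) (hn : n₁ ≤ n₂) {τ : ℝ}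
    {K : Type*} [Fintype K] [Nonempty K] {x : K → Fin n₁ × Fin n₂ → ℝ}
    (hx : ∀ k, x k ∈ lstarSphere n₁ n₂ τ) {r : ℝ} (hr : |r| = 1) :
    ∫ G, ⨆ k, r * (x k ⬝ᵥ G) ∂stdGaussianPi (Fin n₁ × Fin n₂) ≤
      5 / 2 * (Real.sqrt τ * Real.sqrt n₂) := by
  choose X hX hXτ hxX using hx
  choose w v hw hv hXwv using fun k => exists_singVals_decomposition (hn₁.trans_le hn) (X k)
  have : Nonempty (Fin n₁) := ⟨⟨0, hn₁⟩⟩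
  have : Nonempty (Fin n₂) := ⟨⟨0, hn₁.trans_le hn⟩⟩
  set u : (K × Fin n₁) × Bool → Fin n₁ → ℝ := fun q =>
    (if q.2 then (1 : ℝ) else -1) • w q.1.1 q.1.2 with hu
  have hu1 : ∀ q, u q ⬝ᵥ u q = 1 := by
    rintro ⟨q, b⟩
    cases b <;> simp [hu, hw]
  obtain ⟨iS, hS⟩ := integral_bilinear_ciSup_le (by simpa using hn)
    (fun q : K × Fin n₁ => v q.1 q.2) u (fun q => hv _ _) hu1
  set S : (Fin n₁ × Fin n₂ → ℝ) → ℝ := fun A => ⨆ q : K × Fin n₁, ⨆ l,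
    (fun p : Fin n₁ × Fin n₂ => u l p.1 * v q.1 q.2 p.2) ⬝ᵥ A with hSdef
  have hle : ∀ (A : Fin n₁ × Fin n₂ → ℝ) k i b,
      (fun p : Fin n₁ × Fin n₂ => u ((k, i), b) p.1 * v k i p.2) ⬝ᵥ A ≤ S A := fun A k i b =>
    (le_ciSup (f := fun l => (fun p : Fin n₁ × Fin n₂ => u l p.1 * v k i p.2) ⬝ᵥ A)
      (Set.finite_range _).bddAbove ((k, i), b)).trans
    (le_ciSup (f := fun q : K × Fin n₁ => ⨆ l,
      (fun p : Fin n₁ × Fin n₂ => u l p.1 * v q.1 q.2 p.2) ⬝ᵥ A)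
      (Set.finite_range _).bddAbove (k, i))
  have habs : ∀ (A : Fin n₁ × Fin n₂ → ℝ) k i,
      |(fun p : Fin n₁ × Fin n₂ => w k i p.1 * v k i p.2) ⬝ᵥ A| ≤ S A := by
    intro A k i
    have h1 := hle A k i true
    have h2 := hle A k i false
    simp only [hu, dotProduct, if_true, one_mul, Pi.smul_apply, smul_eq_mul, Bool.false_eq_true,
      if_false, neg_mul, Finset.sum_neg_distrib] at h1 h2
    exact abs_le.2 ⟨by simp only [dotProduct]; linarith, by simp only [dotProduct]; linarith⟩
  have hS0 : ∀ A, 0 ≤ S A := fun A =>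
    (abs_nonneg _).trans (habs A (Classical.arbitrary K) (Classical.arbitrary (Fin n₁)))
  have hpt : ∀ A : Fin n₁ × Fin n₂ → ℝ, ⨆ k, r * (x k ⬝ᵥ A) ≤ Real.sqrt τ * S A := by
    intro A
    refine ciSup_le fun k => ?_
    have hF := frobNorm_pos (hX k)
    have hs : ∀ i, 0 ≤ singVals (X k) i := fun i => Real.sqrt_nonneg _
    have h1 : x k ⬝ᵥ A = ∑ i, singVals (X k) i / frobNorm (X k) *
        ((fun p : Fin n₁ × Fin n₂ => w k i p.1 * v k i p.2) ⬝ᵥ A) := by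
      rw [hxX k]
      simp only [dotProduct, hXwv k, Finset.sum_div, Finset.sum_mul, Finset.mul_sum]
      rw [Finset.sum_comm]
      refine Finset.sum_congr rfl fun i _ => Finset.sum_congr rfl fun p _ => by ring
    have h2 : nuclearNorm (X k) / frobNorm (X k) ≤ Real.sqrt τ := by
      refine Real.le_sqrt_of_sq_le ?_
      rw [div_pow]
      exact hXτ k
    calc r * (x k ⬝ᵥ A) ≤ |r * (x k ⬝ᵥ A)| := le_abs_self _
      _ = |x k ⬝ᵥ A| := by rw [abs_mul, hr, one_mul]
      _ ≤ ∑ i, singVals (X k) i / frobNorm (X k) * S A := by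
          rw [h1]
          refine (Finset.abs_sum_le_sum_abs _ _).trans (Finset.sum_le_sum fun i _ => ?_)
          rw [abs_mul, abs_of_nonneg (div_nonneg (hs i) hF.le)]
          exact mul_le_mul_of_nonneg_left (habs A k i) (div_nonneg (hs i) hF.le)
      _ = nuclearNorm (X k) / frobNorm (X k) * S A := by
          rw [← Finset.sum_mul, ← Finset.sum_div, nuclearNorm]
      _ ≤ _ := mul_le_mul_of_nonneg_right h2 (hS0 A)
  have i1 : Integrable (fun G => ⨆ k, r * (x k ⬝ᵥ G)) (stdGaussianPi (Fin n₁ × Fin n₂)) := by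
    simpa only [smul_dotProduct, smul_eq_mul] using integrable_ciSup fun k => r • x k
  refine (integral_mono i1 (iS.const_mul _) hpt).trans ?_
  rw [integral_const_mul]
  rw [Fintype.card_fin] at hS
  calc _ ≤ Real.sqrt τ * (5 / 2 * Real.sqrt n₂) := mul_le_mul_of_nonneg_left hS (Real.sqrt_nonneg _)
    _ = _ := by ring

/-- The matrix with entries `ω`, applied to the vector `x`. -/
def gaussianAction {M N : Type*} [Fintype N] (ω : M × N → ℝ) (x : N → ℝ) : M → ℝ :=
  fun k => (fun p => ω (k, p)) ⬝ᵥ x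

lemma dotProduct_gaussianAction {M N : Type*} [Fintype M] [Fintype N] (ω : M × N → ℝ)
    (x : N → ℝ) (u : M → ℝ) :
    (fun p : M × N => u p.1 * x p.2) ⬝ᵥ ω = u ⬝ᵥ gaussianAction ω x := by
  simp only [gaussianAction, dotProduct, Fintype.sum_prod_type, Finset.mul_sum]
  exact Finset.sum_congr rfl fun i _ => Finset.sum_congr rfl fun j _ => by ring

/-- Chernoff's bound on top of Gordon's inequality, for test vectors `u`. -/
lemma measure_gaussianAction_deviation_le {m n₁ n₂ : ℕ} (hn₁ : 0 < n₁) (hn : n₁ ≤ n₂)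
    {τ s r a b : ℝ}
    (hs : 0 < s) (hsτ : 6 * (Real.sqrt τ * Real.sqrt n₂) ≤ s) (hr : |r| = 1)
    {K U : Type*} [Fintype K] [Nonempty K] [Fintype U] [Nonempty U]
    {x : K → Fin n₁ × Fin n₂ → ℝ} (hx : ∀ k, x k ∈ lstarSphere n₁ n₂ τ)
    {u : U → Fin m → ℝ} (hu : ∀ l, u l ⬝ᵥ u l = 1)
    (hmean : r * ∫ g, ⨆ l, u l ⬝ᵥ g ∂stdGaussianPi (Fin m) ≤ b) (hab : b + 17 / 18 * s ≤ a) :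
    stdGaussianPi (Fin m × Fin n₁ × Fin n₂)
        {ω | ∃ k, a ≤ r * ⨆ l, u l ⬝ᵥ gaussianAction ω (x k)} ≤
      ENNReal.ofReal (Real.exp (-s ^ 2 / 8)) := by
  set T : (Fin m × Fin n₁ × Fin n₂ → ℝ) → ℝ := fun ω =>
    ⨆ k, r * ⨆ l, (fun p : Fin m × Fin n₁ × Fin n₂ => u l p.1 * x k p.2) ⬝ᵥ ω with hT
  have hx1 : ∀ k, x k ⬝ᵥ x k = 1 := fun k => dotProduct_self_of_mem_lstarSphere (hx k)
  have ht : 0 < s / 2 := by positivity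
  have iE : Integrable (fun ω => Real.exp (s / 2 * T ω))
      (stdGaussianPi (Fin m × Fin n₁ × Fin n₂)) := by
    refine integrable_exp_comp_dotProduct
      (fun (q : K × U) (p : Fin m × Fin n₁ × Fin n₂) => u q.2 p.1 * x q.1 p.2)
      (f := fun y => s / 2 * ⨆ k, r * ⨆ l, y (k, l))
      ((measurable_minmax r).const_mul _) (A := 0) (B := s / 2) ht.le fun y => ?_
    rw [abs_mul, abs_of_pos ht, zero_add]
    gcongr
    exact abs_minmax_le hr y
  have hsub : {ω | ∃ k, a ≤ r * ⨆ l, u l ⬝ᵥ gaussianAction ω (x k)} ⊆ {ω | a ≤ T ω} := by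
    rintro ω ⟨k, hk⟩
    simp only [← dotProduct_gaussianAction] at hk
    exact hk.trans (le_ciSup (f := fun k => r * ⨆ l,
      (fun p : Fin m × Fin n₁ × Fin n₂ => u l p.1 * x k p.2) ⬝ᵥ ω) (Set.finite_range _).bddAbove k)
  have hchern := measure_ge_le_exp_mul_mgf (μ := stdGaussianPi (Fin m × Fin n₁ × Fin n₂))
    (X := T) a ht.le iE
  have h1 := gordon_exp hr ht x u hx1 hu
  have h2 := integral_exp_mul_ciSup_le (s / 2 * r) u hu
  have h3 := integral_exp_mul_ciSup_le (s / 2) (fun k => r • x k) (fun k => by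
    rw [smul_dotProduct, dotProduct_smul, hx1, smul_eq_mul, smul_eq_mul, mul_one,
      ← abs_mul_abs_self, hr, one_mul])
  have h4 := integral_ciSup_lstarSphere_le hn₁ hn hx hr
  simp only [smul_dotProduct, smul_eq_mul] at h3
  simp only [mul_assoc] at h2
  have hrr : (s / 2 * r) ^ 2 = (s / 2) ^ 2 := by
    rw [mul_pow, ← sq_abs r, hr, one_pow, mul_one]
  rw [hrr] at h2
  have h5 : Real.exp ((s / 2) ^ 2 / 2) * mgf T (stdGaussianPi (Fin m × Fin n₁ × Fin n₂)) (s / 2) ≤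
      Real.exp ((s / 2) ^ 2 / 2) * Real.exp ((s / 2) ^ 2 / 2 + s / 2 * (b + 5 / 12 * s)) := by
    refine h1.trans ((mul_le_mul h2 h3 (integral_nonneg fun _ => (Real.exp_pos _).le)
      (Real.exp_pos _).le).trans ?_)
    rw [← Real.exp_add, ← Real.exp_add]
    refine Real.exp_le_exp.2 ?_
    have h6 := mul_le_mul_of_nonneg_left hmean ht.le
    have h7 := mul_le_mul_of_nonneg_left (h4.trans (by linarith :
      5 / 2 * (Real.sqrt τ * Real.sqrt n₂) ≤ 5 / 12 * s)) ht.le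
    linarith
  have h6 := le_of_mul_le_mul_left h5 (Real.exp_pos _)
  refine (measure_mono hsub).trans ?_
  rw [← ofReal_measureReal]
  refine ENNReal.ofReal_le_ofReal (hchern.trans
    ((mul_le_mul_of_nonneg_left h6 (Real.exp_pos _).le).trans ?_))
  rw [← Real.exp_add]
  refine Real.exp_le_exp.2 ?_
  have h7 := mul_le_mul_of_nonneg_left hab ht.le
  nlinarith

/-- Deviation of the length of `gaussianAction ω x` for finitely many `x`. -/
lemma measure_exists_fin_deviation_le {m n₁ n₂ : ℕ} (hn₁ : 0 < n₁) (hn : n₁ ≤ n₂) {τ s r : ℝ}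
    (hs : 6 ≤ s) (hsm : s ≤ Real.sqrt m) (hsτ : 6 * (Real.sqrt τ * Real.sqrt n₂) ≤ s)
    (hr : r = 1 ∨ r = -1) {K : Type*} [Fintype K] [Nonempty K]
    {x : K → Fin n₁ × Fin n₂ → ℝ} (hx : ∀ k, x k ∈ lstarSphere n₁ n₂ τ) :
    stdGaussianPi (Fin m × Fin n₁ × Fin n₂)
        {ω | ∃ k, s < r * (Real.sqrt (gaussianAction ω (x k) ⬝ᵥ gaussianAction ω (x k)) -
          Real.sqrt m)} ≤
      ENNReal.ofReal (Real.exp (-s ^ 2 / 8)) := by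
  set R := Real.sqrt m with hR
  have hR0 : 0 < R := by linarith
  have hm : (0 : ℝ) < m := Real.sqrt_pos.1 hR0
  have hRR : R * R = m := Real.mul_self_sqrt hm.le
  have : Nonempty (Fin m) := ⟨⟨0, by exact_mod_cast hm⟩⟩
  obtain ⟨t, htne, ht1, htnorm⟩ := exists_finset_norming (M := Fin m) (δ := 1 / (R * R))
    (by positivity)
  have : Nonempty t := htne.to_subtype
  have hu : ∀ l : t, (l : Fin m → ℝ) ⬝ᵥ (l : Fin m → ℝ) = 1 := fun l => ht1 l l.2
  have hdiv : 2 / R ≤ s / 18 := by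
    rw [div_le_div_iff₀ hR0 (by norm_num)]
    nlinarith
  have hupper := integral_ciSup_dotProduct_le (u := fun l : t => (l : Fin m → ℝ)) hu
  have hlower := le_integral_sqrt_dotProduct_self (M := Fin m)
  rw [Fintype.card_fin, ← hR] at hupper hlower
  have hδ : 0 ≤ 1 - 1 / (R * R) := by
    rw [sub_nonneg, div_le_one (by positivity)]
    nlinarith
  have hmul : ∀ y : ℝ, (1 - 1 / (R * R)) * y = y - y / R / R := fun y => by field_simp
  rcases hr with rfl | rfl
  · refine le_trans (measure_mono ?_) (measure_gaussianAction_deviation_le (r := 1)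
      (a := R + s - 2 / R) (b := R) hn₁ hn (by linarith) hsτ (by simp) hx hu
      (by simpa using hupper) (by linarith))
    rintro ω ⟨k, hk⟩
    refine ⟨k, ?_⟩
    rw [one_mul] at hk ⊢
    refine le_trans ?_ (htnorm _)
    refine le_trans ?_ (mul_le_mul_of_nonneg_left (a := 1 - 1 / (R * R))
      (by linarith : R + s ≤ _) hδ)
    rw [hmul]
    have : (R + s) / R / R ≤ 2 / R := by
      gcongr
      rw [div_le_iff₀ hR0]
      linarith
    linarith
  · refine le_trans (measure_mono ?_) (measure_gaussianAction_deviation_le (r := -1)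
      (a := -R + s) (b := -R + 2 / R) hn₁ hn (by linarith) hsτ (by simp) hx hu ?_ (by linarith))
    · rintro ω ⟨k, hk⟩
      refine ⟨k, ?_⟩
      have := ciSup_dotProduct_le hu (gaussianAction ω (x k))
      linarith
    · have h1 : (1 - 1 / (R * R)) * (R - 1 / R) ≤
          ∫ g, ⨆ l : t, (l : Fin m → ℝ) ⬝ᵥ g ∂stdGaussianPi (Fin m) := by
        refine (mul_le_mul_of_nonneg_left hlower hδ).trans ?_
        rw [← integral_const_mul]
        exact integral_mono (integrable_sqrt_dotProduct_self.const_mul _) (integrable_ciSup _)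
          htnorm
      rw [hmul] at h1
      have h2 : (R - 1 / R) / R / R ≤ 1 / R := by
        gcongr
        rw [div_le_iff₀ hR0]
        have : 0 < 1 / R := by positivity
        linarith
      have h3 : 2 / R = 1 / R + 1 / R := by ring
      linarith

lemma continuous_gaussianAction {M N : Type*} [Fintype N] (ω : M × N → ℝ) :
    Continuous fun x : N → ℝ => gaussianAction ω x :=
  continuous_pi fun _ => continuous_const.dotProduct continuous_id

/-- Deviation of the length of `gaussianAction ω x`, uniformly over `lstarSphere`. -/
theorem measure_exists_lstarSphere_deviation_le {m n₁ n₂ : ℕ} (hn₁ : 0 < n₁) (hn : n₁ ≤ n₂)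
    {τ s r : ℝ} (hs : 6 ≤ s) (hsm : s ≤ Real.sqrt m)
    (hsτ : 6 * (Real.sqrt τ * Real.sqrt n₂) ≤ s) (hr : r = 1 ∨ r = -1) :
    stdGaussianPi (Fin m × Fin n₁ × Fin n₂)
        {ω | ∃ x ∈ lstarSphere n₁ n₂ τ, s < r * (Real.sqrt (gaussianAction ω x ⬝ᵥ
          gaussianAction ω x) - Real.sqrt m)} ≤
      ENNReal.ofReal (Real.exp (-s ^ 2 / 8)) := by
  rcases (lstarSphere n₁ n₂ τ).eq_empty_or_nonempty with h0 | h0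
  · simp [h0]
  have : Nonempty (lstarSphere n₁ n₂ τ) := h0.to_subtype
  set d := TopologicalSpace.denseSeq (lstarSphere n₁ n₂ τ) with hd
  set E : ℕ → Set (Fin m × Fin n₁ × Fin n₂ → ℝ) := fun n => {ω | ∃ k : Fin (n + 1),
    s < r * (Real.sqrt (gaussianAction ω (d k) ⬝ᵥ gaussianAction ω (d k)) - Real.sqrt m)} with hE
  have hmono : Monotone E := by
    rintro a b hab ω ⟨k, hk⟩
    exact ⟨⟨k, by omega⟩, hk⟩
  have hsub : {ω | ∃ x ∈ lstarSphere n₁ n₂ τ, s < r * (Real.sqrt (gaussianAction ω x ⬝ᵥ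
      gaussianAction ω x) - Real.sqrt m)} ⊆ ⋃ n, E n := by
    rintro ω ⟨x, hx, hxs⟩
    have hc : Continuous fun y : lstarSphere n₁ n₂ τ => r * (Real.sqrt (gaussianAction ω y ⬝ᵥ
        gaussianAction ω y) - Real.sqrt m) := by
      have h1 := (continuous_gaussianAction ω).comp
        (continuous_subtype_val (p := fun y => y ∈ lstarSphere n₁ n₂ τ))
      exact continuous_const.mul (((h1.dotProduct h1).sqrt).sub continuous_const)
    obtain ⟨_, hy, ⟨n, rfl⟩⟩ := (TopologicalSpace.denseRange_denseSeq
      (lstarSphere n₁ n₂ τ)).inter_open_nonempty _ (isOpen_lt continuous_const hc) ⟨⟨x, hx⟩, hxs⟩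
    exact Set.mem_iUnion.2 ⟨n, ⟨n, by omega⟩, hy⟩
  refine (measure_mono hsub).trans ?_
  rw [hmono.measure_iUnion]
  exact iSup_le fun n => measure_exists_fin_deviation_le hn₁ hn hs hsm hsτ hr
    (x := fun k : Fin (n + 1) => (d k : Fin n₁ × Fin n₂ → ℝ)) fun k => (d k).2

lemma vnorm_scaledOp_div_frobNorm {m n₁ n₂ : ℕ} (ω : (Fin m × Fin n₁ × Fin n₂) → ℝ)
    {X : Matrix (Fin n₁) (Fin n₂) ℝ} (hX : X ≠ 0) :
    vnorm (scaledOp ω X) / frobNorm X =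
      Real.sqrt (gaussianAction ω (fun p => X p.1 p.2 / frobNorm X) ⬝ᵥ
        gaussianAction ω (fun p => X p.1 p.2 / frobNorm X)) / Real.sqrt m := by
  have hF := frobNorm_pos hX
  have h1 : ∀ k, gaussianAction ω (fun p => X p.1 p.2 / frobNorm X) k =
      opOf (ensembleMatrices ω) X k / frobNorm X := by
    intro k
    simp only [gaussianAction, dotProduct, opOf, matInner, ensembleMatrices, Matrix.trace,
      Matrix.diag, Matrix.mul_apply, Matrix.transpose_apply, Matrix.of_apply,
      Fintype.sum_prod_type, Finset.sum_div]
    rw [Finset.sum_comm]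
    exact Finset.sum_congr rfl fun i _ => Finset.sum_congr rfl fun j _ => by ring
  have h2 : ∑ k, scaledOp ω X k ^ 2 = (∑ k, opOf (ensembleMatrices ω) X k ^ 2) / m := by
    simp only [scaledOp, div_pow, Real.sq_sqrt (Nat.cast_nonneg m), Finset.sum_div]
  have h3 : (fun k => opOf (ensembleMatrices ω) X k / frobNorm X) ⬝ᵥ
      (fun k => opOf (ensembleMatrices ω) X k / frobNorm X) =
      (∑ k, opOf (ensembleMatrices ω) X k ^ 2) / frobNorm X ^ 2 := by
    simp only [dotProduct, ← pow_two, div_pow, Finset.sum_div]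
  rw [funext h1, h3, vnorm, h2, Real.sqrt_div (by positivity), Real.sqrt_div (by positivity),
    Real.sqrt_sq hF.le]
  ring

lemma lstarRank_single_le_one {n₁ n₂ : ℕ} (i : Fin n₁) (j : Fin n₂) :
    lstarRank (Matrix.single i j (1 : ℝ)) ≤ 1 := by
  set X := Matrix.single i j (1 : ℝ) with hX
  set hH := Matrix.isHermitian_mul_conjTranspose_self X
  have hP : X * X.conjTranspose = Matrix.single i i 1 := by
    simp [hX]
  have hPP : (X * X.conjTranspose) * (X * X.conjTranspose) = X * X.conjTranspose := by
    rw [hP, Matrix.single_mul_single_same, one_mul]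
  have hlam : ∀ k, hH.eigenvalues k * hH.eigenvalues k = hH.eigenvalues k := by
    intro k
    have h := hH.mulVec_eigenvectorBasis k
    have h2 : (X * X.conjTranspose).mulVec ((X * X.conjTranspose).mulVec
        (hH.eigenvectorBasis k).ofLp) = (X * X.conjTranspose).mulVec
        (hH.eigenvectorBasis k).ofLp := by
      rw [Matrix.mulVec_mulVec, hPP]
    rw [h, Matrix.mulVec_smul, h, smul_smul] at h2
    have h3 : (hH.eigenvectorBasis k).ofLp ≠ 0 := fun h0 =>
      hH.eigenvectorBasis.orthonormal.ne_zero k (by ext a; simpa using congrFun h0 a)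
    exact smul_left_injective ℝ h3 h2
  have hs : ∀ k, singVals X k = hH.eigenvalues k := by
    intro k
    have h0 : 0 ≤ hH.eigenvalues k := by
      rw [← hlam k]
      exact mul_self_nonneg _
    change Real.sqrt (hH.eigenvalues k) = _
    rw [Real.sqrt_eq_iff_mul_self_eq h0 h0]
    exact (hlam k).symm
  have hnuc : nuclearNorm X = 1 := by
    have htr : (X * X.conjTranspose).trace = 1 := by
      rw [hP]
      simp
    rw [hH.trace_eq_sum_eigenvalues] at htr
    simpa [nuclearNorm, hs] using htr
  have hfrob : frobNorm X = 1 := by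
    rw [frobNorm, Real.sqrt_eq_one, ← Fintype.sum_prod_type', Finset.sum_eq_single (i, j)]
    · simp [hX]
    · rintro ⟨a, b⟩ - hab
      have : ¬(i = a ∧ j = b) := fun h => hab (by rw [h.1, h.2])
      simp [hX, this]
    · simp
  rw [lstarRank, hnuc, hfrob]
  norm_num

/-- for the Gaussian ensemble, if `m ≥ 36 τ n₂ / ε²` then the ℓ*-constrained
singular values of `𝒜/√m` concentrate around `1`. -/
theorem stmt15 {m n₁ n₂ : ℕ} (hn : n₁ ≤ n₂) (τ : ℝ) (hτ1 : 1 ≤ τ) (hτ2 : τ ≤ (n₁ : ℝ))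
    (ε : ℝ) (hε0 : 0 < ε) (hε1 : ε < 1) (hm : 36 * τ * n₂ / ε ^ 2 ≤ (m : ℝ)) :
    gaussianEnsemble m n₁ n₂ {ω | 1 + ε < cmsvMax (scaledOp ω) τ} ≤
      ENNReal.ofReal (Real.exp (-(m : ℝ) * ε ^ 2 / 8)) ∧
    gaussianEnsemble m n₁ n₂ {ω | cmsvMin (scaledOp ω) τ < 1 - ε} ≤
      ENNReal.ofReal (Real.exp (-(m : ℝ) * ε ^ 2 / 8)) := by
  have hn₁ : 0 < n₁ := by
    have : (0 : ℝ) < n₁ := by linarith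
    exact_mod_cast this
  have hn₂ : (1 : ℝ) ≤ n₂ := by exact_mod_cast hn₁.trans_le hn
  rw [div_le_iff₀ (by positivity)] at hm
  set R := Real.sqrt m with hR
  have hRR : R ^ 2 = m := Real.sq_sqrt (Nat.cast_nonneg m)
  have hR0 : 0 ≤ R := Real.sqrt_nonneg _
  have hroot : Real.sqrt τ * Real.sqrt n₂ = Real.sqrt (τ * n₂) :=
    (Real.sqrt_mul (by linarith) _).symm
  have hsτ : 6 * (Real.sqrt τ * Real.sqrt n₂) ≤ ε * R := by
    rw [hroot]
    refine abs_le_of_sq_le_sq' ?_ (by positivity) |>.2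
    rw [mul_pow, mul_pow, Real.sq_sqrt (by positivity), hRR]
    linarith
  have hs : 6 ≤ ε * R := by
    refine le_trans ?_ hsτ
    rw [hroot]
    have : 1 ≤ Real.sqrt (τ * n₂) := Real.one_le_sqrt.2 (by nlinarith)
    linarith
  have hsm : ε * R ≤ R := mul_le_of_le_one_left hR0 hε1.le
  have hRpos : 0 < R := by linarith
  have hexp : -(m : ℝ) * ε ^ 2 / 8 = -(ε * R) ^ 2 / 8 := by rw [mul_pow, hRR]; ring
  rw [hexp]
  have key : ∀ r : ℝ, r = 1 ∨ r = -1 → _ := fun r hr =>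
    measure_exists_lstarSphere_deviation_le (m := m) hn₁ hn hs hsm hsτ hr
  constructor
  · refine le_trans (measure_mono ?_) (key 1 (Or.inl rfl))
    intro ω hω
    have hω' : 1 + ε < cmsvMax (scaledOp ω) τ := hω
    rw [cmsvMax] at hω'
    obtain ⟨c, ⟨X, hX, hXτ, rfl⟩, hc⟩ := exists_lt_of_lt_csSup (by
      by_contra h
      rw [Set.not_nonempty_iff_eq_empty] at h
      rw [h, Real.sSup_empty] at hω'
      linarith) hω'
    refine ⟨_, ⟨X, hX, hXτ, rfl⟩, ?_⟩
    rw [vnorm_scaledOp_div_frobNorm ω hX, lt_div_iff₀ hRpos] at hc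
    rw [one_mul]
    linarith
  · refine le_trans (measure_mono ?_) (key (-1) (Or.inr rfl))
    intro ω hω
    have hω' : cmsvMin (scaledOp ω) τ < 1 - ε := hω
    rw [cmsvMin] at hω'
    have hne : {c | ∃ X : Matrix (Fin n₁) (Fin n₂) ℝ, X ≠ 0 ∧ lstarRank X ≤ τ ∧
        c = vnorm (scaledOp ω X) / frobNorm X}.Nonempty :=
      ⟨_, Matrix.single ⟨0, hn₁⟩ ⟨0, hn₁.trans_le hn⟩ 1,
        fun h => by simpa using congrFun (congrFun h ⟨0, hn₁⟩) ⟨0, hn₁.trans_le hn⟩,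
        (lstarRank_single_le_one _ _).trans hτ1, rfl⟩
    obtain ⟨c, ⟨X, hX, hXτ, rfl⟩, hc⟩ := exists_lt_of_csInf_lt hne hω'
    refine ⟨_, ⟨X, hX, hXτ, rfl⟩, ?_⟩
    rw [vnorm_scaledOp_div_frobNorm ω hX, div_lt_iff₀ hRpos] at hc
    linarith

end
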